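/- arXiv:2109.02835 — 2 statements merged into one kernel-verified Lean document; each statement's English description precedes it below -/
import Mathlib

section
/- For all nonnegative integers a and b, in ℤ[q]: RGF₀(L6(a,b);q) · ∏_{m∈N} [m]_q · ∏_{m∈N'} [m]_q · ∏_{m∈N} [m]_q = ∏_{m∈N} [a+m]_q · ∏_{m∈N'} [a+b+m]_q · ∏_{m∈N} [b+m]_q, where N is the multiset {1, 2, 3, 4, 4, 5, 6, 7} and N' is the multiset {5, 6, 7, 8, 8, 9, 10, 11}. -/
noncomputable section

namespace CL

variable {N : Type} [DecidableEq N] [Fintype N]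

/-- One-step relation generating the partial order on the poset of positions. -/
def step (adj : N → N → Prop) (pos : Finset (N × ℕ)) (x y : N × ℕ) : Prop :=
  x ∈ pos ∧ y ∈ pos ∧ adj x.1 y.1 ∧ y.2 = x.2 + 1

/-- The partial order on positions, generated by `step`. -/
def ple (adj : N → N → Prop) (pos : Finset (N × ℕ)) : N × ℕ → N × ℕ → Prop :=
  Relation.ReflTransGen (step adj pos)

/-- The lattice of `ℕ`-labellings of the positions which are bounded by `k`, order-reversing,
and satisfy a further constraint `extra`. -/
def Elt (adj : N → N → Prop) (pos : Finset (N × ℕ)) (k : ℕ)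
    (extra : ({x : N × ℕ // x ∈ pos} → ℕ) → Prop) : Type :=
  {c : {x : N × ℕ // x ∈ pos} → ℕ //
    (∀ x, c x ≤ k) ∧ (∀ x y, ple adj pos y.1 x.1 → c x ≤ c y) ∧ extra c}

variable {adj : N → N → Prop} {pos : Finset (N × ℕ)} {k : ℕ}
  {extra : ({x : N × ℕ // x ∈ pos} → ℕ) → Prop}

instance : Finite (Elt adj pos k extra) := by
  apply Finite.of_injective
    (fun c : Elt adj pos k extra =>
      fun x => (⟨c.1 x, Nat.lt_succ_of_le (c.2.1 x)⟩ : Fin (k + 1)))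
  intro c d h
  apply Subtype.ext
  funext x
  exact congrArg Fin.val (congrFun h x)

instance : Fintype (Elt adj pos k extra) := Fintype.ofFinite _

instance : DecidableEq (Elt adj pos k extra) := by unfold Elt; infer_instance

/-- Componentwise comparison of labellings. -/
def elLe (r s : Elt adj pos k extra) : Prop := ∀ x, r.1 x ≤ s.1 x

/-- The covering edge of color `i`: exactly one entry, at a position of color `i`,
is increased by one. -/
def edge (i : N) (r s : Elt adj pos k extra) : Prop :=
  ∃ x : {x : N × ℕ // x ∈ pos}, x.1.1 = i ∧ s.1 x = r.1 x + 1 ∧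
    ∀ y, y ≠ x → s.1 y = r.1 y

instance (i : N) (r s : Elt adj pos k extra) : Decidable (edge i r s) := by
  unfold edge; infer_instance

/-- The rank function: the sum of all entries. -/
def rk (t : Elt adj pos k extra) : ℕ := ∑ x ∈ pos.attach, t.1 x

/-- The connected component of `t` in the graph of color-`i` covering edges. -/
def comp (i : N) (t : Elt adj pos k extra) : Set (Elt adj pos k extra) :=
  {s | Relation.ReflTransGen (fun a b => edge i a b ∨ edge i b a) t s}

/-- The integer `m_i(t) = (ρ(t) − min ρ on comp_i(t)) − (max ρ on comp_i(t) − ρ(t))`. -/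
def mwt (i : N) (t : Elt adj pos k extra) : ℤ :=
  ((rk t : ℤ) - ((sInf (rk '' comp i t) : ℕ) : ℤ)) -
    (((sSup (rk '' comp i t) : ℕ) : ℤ) - (rk t : ℤ))

end CL

/-! ### Type `E₆` data -/

/-- The nodes `1', 2', 3', 4', 5', 6'` of the `E₆` Dynkin diagram. -/
inductive N6 : Type
  | m1 | m2 | m3 | m4 | m5 | m6
  deriving DecidableEq

instance : Fintype N6 where
  elems := {N6.m1, N6.m2, N6.m3, N6.m4, N6.m5, N6.m6}
  complete := by intro x; cases x <;> decide

open N6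

/-- Adjacency in the `E₆` Dynkin diagram: edges `1'-2', 2'-3', 3'-4', 3'-5', 5'-6'`. -/
abbrev adj6 : N6 → N6 → Prop := fun a b =>
  (a, b) ∈ ([(m1, m2), (m2, m3), (m3, m4), (m3, m5), (m5, m6)] : List (N6 × N6)) ∨
  (b, a) ∈ ([(m1, m2), (m2, m3), (m3, m4), (m3, m5), (m5, m6)] : List (N6 × N6))

/-- The Cartan matrix of type `E₆`, indexed by the nodes. -/
def A6 : N6 → N6 → ℤ := fun i j => if i = j then 2 else if adj6 i j then -1 else 0

/-- The 24 (color, rank) positions of the poset `P24 = 𝒫`. -/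
def pos24 : Finset (N6 × ℕ) :=
  {(m1, 0), (m2, 1), (m3, 2), (m4, 3), (m5, 3), (m3, 4), (m6, 4), (m2, 5), (m5, 5),
   (m1, 6), (m3, 6), (m2, 7), (m4, 7), (m1, 8), (m3, 8), (m2, 9), (m5, 9), (m3, 10),
   (m6, 10), (m4, 11), (m5, 11), (m3, 12), (m2, 13), (m1, 14)}

/-- The 16 (color, rank) positions of the minuscule poset `P16' = P_{E₆}(ω₁')`. -/
def pos16p : Finset (N6 × ℕ) :=
  {(m6, 0), (m5, 1), (m3, 2), (m2, 3), (m4, 3), (m1, 4), (m3, 4), (m2, 5), (m5, 5),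
   (m3, 6), (m6, 6), (m4, 7), (m5, 7), (m3, 8), (m2, 9), (m1, 10)}

/-- The 16 (color, rank) positions of the minuscule poset `P16'' = P_{E₆}(ω₆')`. -/
def pos16pp : Finset (N6 × ℕ) :=
  {(m1, 0), (m2, 1), (m3, 2), (m4, 3), (m5, 3), (m3, 4), (m6, 4), (m2, 5), (m5, 5),
   (m1, 6), (m3, 6), (m2, 7), (m4, 7), (m3, 8), (m5, 9), (m6, 10)}

/-- The extra constraints on elements of `L6(a,b)`: `c((1',8)) ≤ a` and `c((1',6)) ≥ a`. -/
def extra6 (a : ℕ) : ({x : N6 × ℕ // x ∈ pos24} → ℕ) → Prop := fun c =>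
  c ⟨(m1, 8), by decide⟩ ≤ a ∧ a ≤ c ⟨(m1, 6), by decide⟩

/-- The lattice `L6(a,b) = L_{E₆}(aω₁' + bω₆')`. -/
abbrev L6ab (a b : ℕ) : Type := CL.Elt adj6 pos24 (a + b) (extra6 a)

/-- The lattice `L6'(k) = L_{E₆}(kω₁')`. -/
abbrev L6p (k : ℕ) : Type := CL.Elt adj6 pos16p k (fun _ => True)

/-- The lattice `L6''(k) = L_{E₆}(kω₆')`. -/
abbrev L6pp (k : ℕ) : Type := CL.Elt adj6 pos16pp k (fun _ => True)

/-- The `q`-integer `[m]_q = 1 + q + ⋯ + q^{m−1}` in `ℤ[q]`. -/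
def qint (m : ℕ) : Polynomial ℤ := ∑ i ∈ Finset.range m, Polynomial.X ^ i

/-- The first multiset of `q`-integer indices for `E₆`. -/
def NA : List ℕ := [1, 2, 3, 4, 4, 5, 6, 7]

/-- The second multiset of `q`-integer indices for `E₆`. -/
def NB : List ℕ := [5, 6, 7, 8, 8, 9, 10, 11]

/-!
The nonzero entries of an order-reversing labelling form an order ideal, and lowering them all by
one leaves a labelling of the same kind supported in that ideal. Peeling off supports in this way,
the generating function becomes the value at the full poset of `a` iterations of the transfer
operator on ideals containing `(1', 6)`, after `b` iterations of the one on ideals avoiding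
`(1', 8)`. These operators are triangular for inclusion, with powers of `q` on the diagonal. Hence
both sides of the identity are, in `a` and (from `b = 1` on) in `b`, sequences killed by
`(E - 1)(E - q) ⋯ (E - q ^ 16)`, `E` being the shift, and it suffices to compare them for `a ≤ 16`
and `b ≤ 17`. There, both sides are polynomials in `q` with nonnegative coefficients, so that their
equality can be read off their values at a single integer exceeding all coefficients.
-/

namespace RankGF

open Finset Polynomial

section Labellings

variable {α : Type*} [Fintype α]

/-- The set of nonzero entries of a labelling. It is an order ideal when the labelling is antitone,
and subtracting its indicator leaves an antitone labelling: the recursion behind `transfer`. -/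
def support (c : α → ℕ) : Finset α := {x | 0 < c x}

@[simp]
lemma mem_support {c : α → ℕ} {x : α} : x ∈ support c ↔ 0 < c x := by simp [support]

lemma support_zero : support (0 : α → ℕ) = ∅ := by simp [support]

lemma support_sub_one_subset (c : α → ℕ) : support (c - 1) ⊆ support c := fun x hx => by
  simp only [mem_support, Pi.sub_apply, Pi.one_apply] at hx ⊢
  omega

lemma sub_one_add_indicator_support (c : α → ℕ) :
    c - 1 + (support c : Set α).indicator 1 = c := by
  ext x
  by_cases hx : 0 < c x
  · simpa [hx] using Nat.sub_add_cancel hx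
  · simp [Nat.eq_zero_of_not_pos hx]

lemma add_indicator_sub_one (d : α → ℕ) {t : Finset α} (hd : support d ⊆ t) :
    d + (t : Set α).indicator 1 - 1 = d := by
  ext x
  by_cases hx : x ∈ t
  · simp [hx]
  · have : d x = 0 := by simpa using mt (@hd x) hx
    simp [hx, this]

lemma support_add_indicator (d : α → ℕ) {t : Finset α} (hd : support d ⊆ t) :
    support (d + (t : Set α).indicator 1) = t := by
  ext x
  by_cases hx : x ∈ t
  · simp [hx]
  · simpa [hx] using mt (@hd x) hx

lemma sum_add_indicator (d : α → ℕ) (t : Finset α) :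
    ∑ x, (d + (t : Set α).indicator 1 : α → ℕ) x = ∑ x, d x + #t := by
  classical
  simp [sum_add_distrib, Set.indicator_apply]

lemma antitone_iff [Preorder α] {c : α → ℕ} :
    Antitone c ↔ IsLowerSet (support c : Set α) ∧ Antitone (c - 1) := by
  constructor
  · intro hc
    refine ⟨fun x y hyx hx => ?_, fun x y hxy => Nat.sub_le_sub_right (hc hxy) 1⟩
    simpa using (show 0 < c x by simpa using hx).trans_le (hc hyx)
  · rintro ⟨hs, hc⟩ x y hxy
    have hsupp : 0 < c y → 0 < c x := by simpa using @hs y x hxy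
    have hle : c y - 1 ≤ c x - 1 := hc hxy
    omega

lemma sum_eq_sum_add_indicator {M : Type*} [AddCommMonoid M] {S : Finset (α → ℕ)}
    {𝓕 : Finset (Finset α)} {P : Finset α → Finset (α → ℕ)}
    (hS : ∀ c, c ∈ S ↔ support c ∈ 𝓕 ∧ c - 1 ∈ P (support c))
    (hP : ∀ t, ∀ d ∈ P t, support d ⊆ t) (f : (α → ℕ) → M) :
    ∑ c ∈ S, f c = ∑ t ∈ 𝓕, ∑ d ∈ P t, f (d + (t : Set α).indicator 1) := by
  rw [sum_sigma']
  refine sum_nbij' (fun c => ⟨support c, c - 1⟩) (fun p => p.2 + (p.1 : Set α).indicator 1)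
    (fun c hc => by simpa using (hS c).1 hc) ?_ (fun c _ => sub_one_add_indicator_support c) ?_
    (fun c _ => by rw [sub_one_add_indicator_support])
  · rintro ⟨t, d⟩ h
    obtain ⟨ht, hd⟩ := mem_sigma.1 h
    have hdt := hP t d hd
    rw [hS, support_add_indicator d hdt, add_indicator_sub_one d hdt]
    exact ⟨ht, hd⟩
  · rintro ⟨t, d⟩ h
    have hdt := hP t d (mem_sigma.1 h).2
    rw [support_add_indicator d hdt, add_indicator_sub_one d hdt]

variable [DecidableEq α] [Preorder α] {u v : α} {a b : ℕ} {c : α → ℕ} {s : Finset α}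

open scoped Classical in
/-- The antitone labellings `c` by `0, …, a + b` with `c v ≤ a ≤ c u`, supported in `s`. The
support condition makes the family recursive in `s`; the lattice `L6(a,b)` is the case of the
full poset. -/
def labellings (u v : α) (a b : ℕ) (s : Finset α) : Finset (α → ℕ) :=
  {c ∈ Fintype.piFinset fun _ => range (a + b + 1) |
    Antitone c ∧ c v ≤ a ∧ a ≤ c u ∧ support c ⊆ s}

open scoped Classical in
/-- The order ideals containing `u`. -/
def idealsWith (u : α) : Finset (Finset α) := {t | IsLowerSet (t : Set α) ∧ u ∈ t}

open scoped Classical in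
/-- The order ideals avoiding `v`. -/
def idealsWithout (v : α) : Finset (Finset α) := {t | IsLowerSet (t : Set α) ∧ v ∉ t}

lemma mem_labellings : c ∈ labellings u v a b s ↔
    (∀ x, c x ≤ a + b) ∧ Antitone c ∧ c v ≤ a ∧ a ≤ c u ∧ support c ⊆ s := by
  simp [labellings, Fintype.mem_piFinset]

lemma mem_idealsWith {t : Finset α} :
    t ∈ idealsWith u ↔ IsLowerSet (t : Set α) ∧ u ∈ t := by
  simp [idealsWith]

lemma mem_idealsWithout {t : Finset α} :
    t ∈ idealsWithout v ↔ IsLowerSet (t : Set α) ∧ v ∉ t := by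
  simp [idealsWithout]

lemma support_subset_of_mem_labellings (hc : c ∈ labellings u v a b s) : support c ⊆ s :=
  (mem_labellings.1 hc).2.2.2.2

lemma labellings_zero_zero : labellings u v 0 0 s = {0} := by
  ext c
  rw [mem_labellings, mem_singleton]
  constructor
  · rintro ⟨hc, -⟩
    exact funext fun x => Nat.le_zero.1 (hc x)
  · rintro rfl
    exact ⟨fun _ => le_rfl, antitone_const, le_rfl, le_rfl, by simp [support_zero]⟩

lemma mem_labellings_succ_left : c ∈ labellings u v (a + 1) b s ↔
    support c ∈ (idealsWith u).filter (· ⊆ s) ∧ c - 1 ∈ labellings u v a b (support c) := by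
  have hbound : (∀ x, c x ≤ a + 1 + b) ↔ ∀ x, (c - 1) x ≤ a + b :=
    forall_congr' fun x => by simp only [Pi.sub_apply, Pi.one_apply]; omega
  have hv : c v ≤ a + 1 ↔ (c - 1) v ≤ a := by simp
  have hu : a + 1 ≤ c u ↔ 0 < c u ∧ a ≤ (c - 1) u := by
    simp only [Pi.sub_apply, Pi.one_apply]; omega
  simp only [mem_filter, mem_idealsWith, mem_labellings, mem_support, antitone_iff (c := c),
    hbound, hv, hu, support_sub_one_subset]
  tauto

lemma mem_labellings_zero_succ : c ∈ labellings u v 0 (b + 1) s ↔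
    support c ∈ (idealsWithout v).filter (· ⊆ s) ∧ c - 1 ∈ labellings u v 0 b (support c) := by
  have hbound : (∀ x, c x ≤ 0 + (b + 1)) ↔ ∀ x, (c - 1) x ≤ 0 + b :=
    forall_congr' fun x => by simp only [Pi.sub_apply, Pi.one_apply]; omega
  have hv : c v ≤ 0 ↔ ¬0 < c v ∧ (c - 1) v ≤ 0 := by
    simp only [Pi.sub_apply, Pi.one_apply]; omega
  simp only [mem_filter, mem_idealsWithout, mem_labellings, mem_support, antitone_iff (c := c),
    hbound, hv, support_sub_one_subset, zero_le]
  tauto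

lemma mul_le_sum_of_mem_labellings {k : ℕ} (hk : ∀ t ∈ idealsWith u, k ≤ #t)
    (hc : c ∈ labellings u v a b s) : k * a ≤ ∑ x, c x := by
  induction a generalizing c s with
  | zero => simp
  | succ a ih =>
    obtain ⟨hsupp, hsub⟩ := mem_labellings_succ_left.1 hc
    calc k * (a + 1) = k * a + k := by ring
      _ ≤ ∑ x, (c - 1) x + #(support c) := add_le_add (ih hsub) (hk _ (mem_filter.1 hsupp).1)
      _ = ∑ x, c x := by rw [← sum_add_indicator, sub_one_add_indicator_support]

lemma indicator_mem_labellings {t : Finset α} (ht : t ∈ idealsWith u) :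
    (t : Set α).indicator (fun _ => a) ∈ labellings u v a b univ := by
  obtain ⟨hlower, hu⟩ := mem_idealsWith.1 ht
  have hle (x : α) : (t : Set α).indicator (fun _ => a) x ≤ a :=
    Set.indicator_apply_le' (fun _ => le_rfl) fun _ => Nat.zero_le a
  refine mem_labellings.2 ⟨fun x => (hle x).trans (Nat.le_add_right a b), fun x y hxy => ?_,
    hle v, by simp [hu], subset_univ _⟩
  by_cases hy : y ∈ t
  · have hx : x ∈ t := hlower hxy hy
    simp [hx, hy]
  · simp [hy]

theorem isLeast_sum_labellings {k : ℕ} (hk : IsLeast (card '' (idealsWith u : Set (Finset α))) k) :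
    IsLeast ((fun c => ∑ x, c x) '' (labellings u v a b univ : Set (α → ℕ))) (k * a) := by
  obtain ⟨t, ht, rfl⟩ := hk.1
  refine ⟨⟨_, indicator_mem_labellings ht, ?_⟩, ?_⟩
  · classical simp [Set.indicator_apply]
  · rintro _ ⟨c, hc, rfl⟩
    exact mul_le_sum_of_mem_labellings (fun t ht => hk.2 ⟨t, ht, rfl⟩) hc

end Labellings

section Transfer

variable {α R : Type*} [DecidableEq α] [CommSemiring R]

/-- The transfer operator of a weighted family `𝓕` of finite sets: `s` is sent to the weighted sum
of `f` over the members of `𝓕` contained in `s`. -/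
def transfer (w : Finset α → R) (𝓕 : Finset (Finset α)) (f : Finset α → R) (s : Finset α) : R :=
  ∑ t ∈ 𝓕 with t ⊆ s, w t * f t

/-- The generating function of the labellings by their sum of entries, normalized by the rank
`k * a`, the least one when `k` is the size of the smallest order ideal containing `u`. -/
def rankGF [Fintype α] [Preorder α] (u v : α) (k : ℕ) (q : R) (a b : ℕ) : R :=
  ∑ c ∈ labellings u v a b univ, q ^ (∑ x, c x - k * a)

lemma map_rankGF [Fintype α] [Preorder α] {S : Type*} [CommSemiring S] (φ : R →+* S) (u v : α)
    (k : ℕ) (q : R) (a b : ℕ) : φ (rankGF u v k q a b) = rankGF u v k (φ q) a b := by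
  simp [rankGF]

theorem sum_labellings_eq_transfer [Fintype α] [Preorder α] {u v : α} {k : ℕ}
    (hk : ∀ t ∈ idealsWith u, k ≤ #t) (q : R) (a b : ℕ) (s : Finset α) :
    ∑ c ∈ labellings u v a b s, q ^ (∑ x, c x - k * a) =
      (transfer (fun t => q ^ (#t - k)) (idealsWith u))^[a]
        ((transfer (fun t => q ^ #t) (idealsWithout v))^[b] 1) s := by
  induction a generalizing s with
  | zero =>
    induction b generalizing s with
    | zero => simp [labellings_zero_zero]
    | succ b ih =>
      rw [sum_eq_sum_add_indicator (fun _ => mem_labellings_zero_succ)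
        fun t _ => support_subset_of_mem_labellings]
      simp only [Function.iterate_succ_apply', Function.iterate_zero, id_eq] at ih ⊢
      refine sum_congr rfl fun t _ => ?_
      rw [← ih t, mul_sum]
      refine sum_congr rfl fun d _ => ?_
      rw [sum_add_indicator, ← pow_add]
      congr 1
      omega
  | succ a ih =>
    rw [sum_eq_sum_add_indicator (fun _ => mem_labellings_succ_left)
      fun t _ => support_subset_of_mem_labellings]
    simp only [Function.iterate_succ_apply']
    refine sum_congr rfl fun t ht => ?_
    rw [← ih t, mul_sum]
    refine sum_congr rfl fun d hd => ?_
    have hkt := hk t (mem_filter.1 ht).1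
    have hkd := mul_le_sum_of_mem_labellings hk hd
    rw [sum_add_indicator, ← pow_add, mul_add_one]
    congr 1
    omega

end Transfer

section QExponential

variable {R : Type*} [CommRing R] {q : R} {m n : ℕ} {f : ℕ → R}

/-- The sequences killed by `(E - 1)(E - q) ⋯ (E - q ^ (n - 1))`, where `E` is the shift; over a
field with distinct powers of `q` they are spanned by the `a ↦ q ^ (i * a)` with `i < n`. Defined
through the recurrence, they are determined by `n` values over every commutative ring. -/
def qExpSeq (q : R) : ℕ → Submodule R (ℕ → R)
  | 0 => ⊥
  | n + 1 => (qExpSeq q n).comap (LinearMap.funLeft R R Nat.succ - q ^ n • LinearMap.id)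

lemma mem_qExpSeq_zero : f ∈ qExpSeq q 0 ↔ f = 0 := Iff.rfl

lemma mem_qExpSeq_succ :
    f ∈ qExpSeq q (n + 1) ↔ (fun a => f (a + 1) - q ^ n * f a) ∈ qExpSeq q n := Iff.rfl

lemma shift_mem_qExpSeq (hf : f ∈ qExpSeq q n) : (fun a => f (a + 1)) ∈ qExpSeq q n := by
  induction n generalizing f with
  | zero => exact mem_qExpSeq_zero.2 (by rw [mem_qExpSeq_zero.1 hf]; rfl)
  | succ n ih => exact ih hf

lemma qExpSeq_mono (q : R) : Monotone (qExpSeq q) :=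
  monotone_nat_of_le_succ fun n _ hf =>
    sub_mem (shift_mem_qExpSeq hf) ((qExpSeq q n).smul_mem (q ^ n) hf)

lemma one_mem_qExpSeq (q : R) : (1 : ℕ → R) ∈ qExpSeq q 1 := by
  rw [mem_qExpSeq_succ, mem_qExpSeq_zero]
  ext a
  simp

lemma eq_zero_of_mem_qExpSeq (hf : f ∈ qExpSeq q n) (h : ∀ a < n, f a = 0) : f = 0 := by
  induction n generalizing f with
  | zero => exact hf
  | succ n ih =>
    have hrec : (fun a => f (a + 1) - q ^ n * f a) = 0 :=
      ih hf fun a ha => by simp [h a (by omega), h (a + 1) (by omega)]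
    funext a
    induction a with
    | zero => exact h 0 n.succ_pos
    | succ a iha => simpa [iha] using congrFun hrec a

lemma eq_zero_of_mem_qExpSeq₂ {F : ℕ → ℕ → R} (hleft : ∀ b, (fun a => F a b) ∈ qExpSeq q n)
    (hright : ∀ a, (fun b => F a (b + 1)) ∈ qExpSeq q m)
    (h : ∀ a < n, ∀ b < m + 1, F a b = 0) : F = 0 := by
  have hgrid : ∀ a < n, F a = 0 := fun a ha => by
    have hsucc := eq_zero_of_mem_qExpSeq (hright a) fun b hb => h a ha (b + 1) (by omega)
    funext b
    cases b with
    | zero => exact h a ha 0 m.succ_pos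
    | succ b => exact congrFun hsucc b
  funext a b
  exact congrFun (eq_zero_of_mem_qExpSeq (hleft b) fun a ha => congrFun (hgrid a ha) b) a

lemma sum_mul_mem {ι : Type*} (M : Submodule R (ℕ → R)) {T : Finset ι} (w : ι → R)
    {F : ℕ → ι → R} (hF : ∀ t ∈ T, (fun b => F b t) ∈ M) :
    (fun b => ∑ t ∈ T, w t * F b t) ∈ M := by
  have hsum : (fun b => ∑ t ∈ T, w t * F b t) = ∑ t ∈ T, w t • fun b => F b t := by
    ext b
    simp
  rw [hsum]
  exact M.sum_mem fun t ht => M.smul_mem (w t) (hF t ht)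

theorem iterate_transfer_mem_qExpSeq {α : Type*} [DecidableEq α] {d : Finset α → ℕ}
    {𝓕 : Finset (Finset α)} (hd : ∀ t ∈ 𝓕, ∀ s ∈ 𝓕, t ⊂ s → d t < d s) (f : Finset α → R)
    {s : Finset α} (hs : s ∈ 𝓕) :
    (fun n => (transfer (fun t => q ^ d t) 𝓕)^[n] f s) ∈ qExpSeq q (d s + 1) := by
  induction s using Finset.strongInduction with
  | H s ih =>
    have hproper (n : ℕ) : (transfer (fun t => q ^ d t) 𝓕)^[n + 1] f s -
        q ^ d s * (transfer (fun t => q ^ d t) 𝓕)^[n] f s =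
          ∑ t ∈ 𝓕 with t ⊂ s, q ^ d t * (transfer (fun t => q ^ d t) 𝓕)^[n] f t := by
      have hsplit : {t ∈ 𝓕 | t ⊆ s} = insert s {t ∈ 𝓕 | t ⊂ s} := by
        ext t
        simp only [mem_filter, mem_insert, subset_iff_ssubset_or_eq]
        constructor
        · tauto
        · rintro (rfl | ht)
          exacts [⟨hs, Or.inr rfl⟩, ⟨ht.1, Or.inl ht.2⟩]
      rw [Function.iterate_succ_apply', transfer, hsplit,
        sum_insert (by simp), add_sub_cancel_left]
    rw [mem_qExpSeq_succ]
    simp only [hproper]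
    refine sum_mul_mem _ _ fun t ht => ?_
    obtain ⟨htF, hts⟩ := mem_filter.1 ht
    exact qExpSeq_mono q (hd t htF s hs hts) (ih t hts htF)

lemma iterate_transfer_mem {α : Type*} [DecidableEq α] (M : Submodule R (ℕ → R))
    (w : Finset α → R) (𝓕 : Finset (Finset α)) {F : ℕ → Finset α → R}
    (hF : ∀ t, (fun b => F b t) ∈ M) (a : ℕ) (s : Finset α) :
    (fun b => (transfer w 𝓕)^[a] (F b) s) ∈ M := by
  induction a generalizing s with
  | zero => exact hF s
  | succ a ih =>
    simp only [Function.iterate_succ_apply']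
    exact sum_mul_mem M w fun t _ => ih t

section RankGF

variable {α : Type*} [DecidableEq α] [Fintype α] [Preorder α] {u v : α} {k : ℕ}

theorem rankGF_mem_qExpSeq_left (hk : ∀ t ∈ idealsWith u, k ≤ #t) (q : R) (b : ℕ) :
    (fun a => rankGF u v k q a b) ∈ qExpSeq q (Fintype.card α - k + 1) := by
  have hcard : ∀ t ∈ idealsWith u, ∀ s ∈ idealsWith u, t ⊂ s → #t - k < #s - k :=
    fun t ht s _ hts => Nat.sub_lt_sub_right (hk t ht) (card_lt_card hts)
  simp only [rankGF, sum_labellings_eq_transfer hk]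
  exact iterate_transfer_mem_qExpSeq hcard _
    (mem_idealsWith.2 ⟨by simpa using isLowerSet_univ, mem_univ u⟩)

-- The shift is needed because the full poset is not a member of `idealsWithout v`.
theorem rankGF_succ_mem_qExpSeq_right (hk : ∀ t ∈ idealsWith u, k ≤ #t)
    (hm : ∀ t ∈ idealsWithout v, #t ≤ m) (q : R) (a : ℕ) :
    (fun b => rankGF u v k q a (b + 1)) ∈ qExpSeq q (m + 1) := by
  simp only [rankGF, sum_labellings_eq_transfer hk]
  refine iterate_transfer_mem _ _ _ (fun s => ?_) a univ
  simp only [Function.iterate_succ_apply']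
  refine sum_mul_mem _ _ fun t ht => ?_
  have ht := (mem_filter.1 ht).1
  exact qExpSeq_mono q (Nat.succ_le_succ (hm t ht))
    (iterate_transfer_mem_qExpSeq (fun _ _ _ _ h => card_lt_card h) 1 ht)

end RankGF

end QExponential

section QNumbers

/-- The `q`-integer `[m]_q = 1 + q + ⋯ + q ^ (m - 1)`. -/
def qNat {R : Type*} [CommSemiring R] (q : R) (m : ℕ) : R := ∑ i ∈ range m, q ^ i

/-- The numerator `∏ F (a + m) * ∏ F (a + b + m') * ∏ F (b + m)`, for `m` in `A` and `m'` in `B`,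
of a Weyl dimension formula, or of its `q`-analogue when `F` is `qNat q`. The denominator is its
value at `a = b = 0`. -/
def weylNumerator {R : Type*} [CommSemiring R] (A B : List ℕ) (F : ℕ → R) (a b : ℕ) : R :=
  (A.map fun m => F (a + m)).prod * (B.map fun m => F (a + b + m)).prod *
    (A.map fun m => F (b + m)).prod

section CommSemiring

variable {R S : Type*} [CommSemiring R] [CommSemiring S]

lemma map_qNat (φ : R →+* S) (q : R) (m : ℕ) : φ (qNat q m) = qNat (φ q) m := by
  simp [qNat]

lemma map_weylNumerator_qNat (φ : R →+* S) (A B : List ℕ) (q : R) (a b : ℕ) :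
    φ (weylNumerator A B (qNat q) a b) = weylNumerator A B (qNat (φ q)) a b := by
  simp [weylNumerator, map_list_prod, map_qNat, Function.comp_def]

lemma weylNumerator_comm (A B : List ℕ) (F : ℕ → R) (a b : ℕ) :
    weylNumerator A B F a b = weylNumerator A B F b a := by
  rw [weylNumerator, weylNumerator, Nat.add_comm a b]
  ring

end CommSemiring

variable {R : Type*} [CommRing R] {q : R} {n : ℕ} {f : ℕ → R}

lemma qNat_mul_mem_qExpSeq (k : ℕ) (hf : f ∈ qExpSeq q n) :
    (fun a => qNat q (a + k) * f a) ∈ qExpSeq q (n + 1) := by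
  induction n generalizing f with
  | zero =>
    simp only [mem_qExpSeq_zero.1 hf, Pi.zero_apply, mul_zero]
    exact zero_mem _
  | succ n ih =>
    have hrec : (fun a => qNat q (a + 1 + k) * f (a + 1) - q ^ (n + 1) * (qNat q (a + k) * f a)) =
        q • (fun a => qNat q (a + k) * (f (a + 1) - q ^ n * f a)) + fun a => f (a + 1) := by
      ext a
      rw [Nat.add_right_comm, qNat, geom_sum_succ, ← qNat]
      simp only [Pi.add_apply, Pi.smul_apply, smul_eq_mul]
      ring
    rw [mem_qExpSeq_succ, hrec]
    exact add_mem (Submodule.smul_mem _ q (ih hf)) (shift_mem_qExpSeq hf)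

lemma prod_qNat_mul_mem_qExpSeq (L : List ℕ) (hf : f ∈ qExpSeq q n) :
    (fun a => (L.map fun m => qNat q (a + m)).prod * f a) ∈ qExpSeq q (L.length + n) := by
  induction L with
  | nil => simpa using hf
  | cons m L ih => simpa [mul_assoc, Nat.add_right_comm] using qNat_mul_mem_qExpSeq m ih

theorem weylNumerator_mem_qExpSeq_left (A B : List ℕ) (q : R) (b : ℕ) :
    (fun a => weylNumerator A B (qNat q) a b) ∈ qExpSeq q (A.length + B.length + 1) := by
  have hAB := prod_qNat_mul_mem_qExpSeq A
    (prod_qNat_mul_mem_qExpSeq (B.map (b + ·)) (one_mem_qExpSeq q))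
  rw [List.length_map] at hAB
  have hprod : (fun a => weylNumerator A B (qNat q) a b) = (A.map fun m => qNat q (b + m)).prod •
      fun a => (A.map fun m => qNat q (a + m)).prod *
        (((B.map (b + ·)).map fun m => qNat q (a + m)).prod * (1 : ℕ → R) a) := by
    ext a
    simp only [weylNumerator, List.map_map, Function.comp_def, Nat.add_assoc, Pi.smul_apply,
      smul_eq_mul, Pi.one_apply]
    ring
  rw [hprod]
  exact Submodule.smul_mem _ _ hAB

theorem weylNumerator_succ_mem_qExpSeq_right (A B : List ℕ) (q : R) (a : ℕ) :
    (fun b => weylNumerator A B (qNat q) a (b + 1)) ∈ qExpSeq q (A.length + B.length + 1) := by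
  simp only [weylNumerator_comm A B (qNat q) a]
  exact shift_mem_qExpSeq (weylNumerator_mem_qExpSeq_left A B q a)

end QNumbers

section Kronecker

lemma coeff_eq_eval_div_pow_mod {p : ℕ[X]} {B : ℕ} (hp : ∀ i, p.coeff i < B) (i : ℕ) :
    p.coeff i = p.eval B / B ^ i % B := by
  have heval (r : ℕ[X]) : r.eval B = r.divX.eval B * B + r.coeff 0 := by
    conv_lhs => rw [← divX_mul_X_add r]
    simp
  induction i generalizing p with
  | zero => rw [heval, pow_zero, Nat.div_one, Nat.mul_add_mod', Nat.mod_eq_of_lt (hp 0)]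
  | succ i ih =>
    have hB : 0 < B := (Nat.zero_le _).trans_lt (hp 0)
    have hdiv : p.eval B / B = p.divX.eval B := by
      rw [heval, Nat.add_comm, Nat.add_mul_div_right _ _ hB, Nat.div_eq_of_lt (hp 0), Nat.zero_add]
    rw [← coeff_divX, ih fun j => by simpa using hp (j + 1), pow_succ', ← Nat.div_div_eq_div_mul,
      hdiv]

lemma coeff_le_eval_one (p : ℕ[X]) (i : ℕ) : p.coeff i ≤ p.eval 1 := by
  rw [eval_eq_sum, Polynomial.sum]
  simp only [one_pow, mul_one]
  by_cases hi : i ∈ p.support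
  · exact single_le_sum (fun _ _ => Nat.zero_le _) hi
  · simp [notMem_support_iff.1 hi]

-- Kronecker substitution: a value exceeding every coefficient displays them as its digits.
theorem eq_of_eval_eq {p r : ℕ[X]} {B : ℕ} (hp : p.eval 1 < B) (hr : r.eval 1 < B)
    (heval : p.eval B = r.eval B) : p = r := by
  ext i
  rw [coeff_eq_eval_div_pow_mod (fun j => (coeff_le_eval_one p j).trans_lt hp),
    coeff_eq_eval_div_pow_mod (fun j => (coeff_le_eval_one r j).trans_lt hr), heval]

end Kronecker

section Product

variable {α R : Type*} [DecidableEq α] [Fintype α] [Preorder α] {u v : α} {k n : ℕ} {A B : List ℕ}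

lemma rankGF_one_le (a b : ℕ) :
    rankGF u v k 1 a b ≤ (a + b + 1) ^ Fintype.card α := by
  classical
  calc rankGF u v k 1 a b = #(labellings u v a b univ) := by simp [rankGF]
    _ ≤ #(Fintype.piFinset fun _ : α => range (a + b + 1)) := card_filter_le _ _
    _ = (a + b + 1) ^ Fintype.card α := by simp

lemma qNat_one : qNat 1 = id := by
  ext m
  simp [qNat]

theorem rankGF_mul_eq_of_nat [CommSemiring R] {N a b : ℕ}
    (hleft : (a + b + 1) ^ Fintype.card α * weylNumerator A B id 0 0 < N)
    (hright : weylNumerator A B id a b < N)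
    (hN : rankGF u v k N a b * weylNumerator A B (qNat N) 0 0 = weylNumerator A B (qNat N) a b)
    (q : R) :
    rankGF u v k q a b * weylNumerator A B (qNat q) 0 0 = weylNumerator A B (qNat q) a b := by
  have hpoly : rankGF u v k (X : ℕ[X]) a b * weylNumerator A B (qNat X) 0 0 =
      weylNumerator A B (qNat X) a b := by
    have heval_left (q : ℕ) :
        (rankGF u v k (X : ℕ[X]) a b * weylNumerator A B (qNat X) 0 0).eval q =
          rankGF u v k q a b * weylNumerator A B (qNat q) 0 0 := by
      rw [← coe_evalRingHom, map_mul, map_rankGF, map_weylNumerator_qNat, coe_evalRingHom, eval_X]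
    have heval_right (q : ℕ) : (weylNumerator A B (qNat (X : ℕ[X])) a b).eval q =
        weylNumerator A B (qNat q) a b := by
      rw [← coe_evalRingHom, map_weylNumerator_qNat, coe_evalRingHom, eval_X]
    refine eq_of_eval_eq (B := N) ?_ ?_ ?_
    · rw [heval_left, qNat_one]
      exact (Nat.mul_le_mul_right _ (rankGF_one_le a b)).trans_lt hleft
    · rwa [heval_right, qNat_one]
    · rw [heval_left, heval_right, hN]
  simpa only [map_mul, map_rankGF, map_weylNumerator_qNat, coe_eval₂RingHom, eval₂_X] using
    congrArg (eval₂RingHom (Nat.castRingHom R) q) hpoly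

theorem rankGF_mul_eq_of_grid [CommRing R] (hk : ∀ t ∈ idealsWith u, k ≤ #t)
    (hα : Fintype.card α - k ≤ n) (hn : ∀ t ∈ idealsWithout v, #t ≤ n)
    (hAB : A.length + B.length ≤ n) (q : R)
    (hgrid : ∀ a < n + 1, ∀ b < n + 2,
      rankGF u v k q a b * weylNumerator A B (qNat q) 0 0 = weylNumerator A B (qNat q) a b)
    (a b : ℕ) :
    rankGF u v k q a b * weylNumerator A B (qNat q) 0 0 = weylNumerator A B (qNat q) a b := by
  have hmem {f g : ℕ → R} {m : ℕ} (hm : m ≤ n) (hf : f ∈ qExpSeq q (m + 1))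
      (hg : g ∈ qExpSeq q (A.length + B.length + 1)) :
      (fun j => f j * weylNumerator A B (qNat q) 0 0 - g j) ∈ qExpSeq q (n + 1) := by
    simp only [mul_comm (f _)]
    exact sub_mem (Submodule.smul_mem _ _ (qExpSeq_mono q (Nat.succ_le_succ hm) hf))
      (qExpSeq_mono q (Nat.succ_le_succ hAB) hg)
  have hzero := eq_zero_of_mem_qExpSeq₂ (q := q)
    (F := fun a b =>
      rankGF u v k q a b * weylNumerator A B (qNat q) 0 0 - weylNumerator A B (qNat q) a b)
    (fun b => hmem hα (rankGF_mem_qExpSeq_left hk q b) (weylNumerator_mem_qExpSeq_left A B q b))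
    (fun a => hmem le_rfl (rankGF_succ_mem_qExpSeq_right hk hn q a)
      (weylNumerator_succ_mem_qExpSeq_right A B q a))
    fun a ha b hb => sub_eq_zero.2 (hgrid a ha b hb)
  exact sub_eq_zero.1 (congrFun (congrFun hzero a) b)

end Product

section BitMasks

variable {α : Type*} {n : ℕ} {idx : α ≃ Fin n}

lemma lt_of_testBit {m i : ℕ} (hm : m < 2 ^ n) (hi : m.testBit i) : i < n := by
  by_contra hni
  simp [Nat.testBit_lt_two_pow (hm.trans_le (Nat.pow_le_pow_right two_pos (not_lt.1 hni)))] at hi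

lemma forall_testBit_imp_iff {p : ℕ → Prop} {m : ℕ} (hm : m < 2 ^ n) :
    (∀ i, m.testBit i → p i) ↔ ∀ x, m.testBit (idx x) → p (idx x) := by
  refine ⟨fun h x => h (idx x), fun h i hi => ?_⟩
  simpa using h (idx.symm ⟨i, lt_of_testBit hm hi⟩) (by simpa using hi)

variable [Fintype α]

variable (idx) in
/-- The subset of `α` encoded by the binary digits of `m`, through the numbering `idx`. -/
def ofMask (m : ℕ) : Finset α := {x | m.testBit (idx x)}

/-- The number of binary digits `1` of `m` below position `n`: the cardinality of `ofMask idx m`. -/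
def bitCount (n m : ℕ) : ℕ := ∑ i ∈ range n, (m.testBit i).toNat

@[simp]
lemma mem_ofMask {m : ℕ} {x : α} : x ∈ ofMask idx m ↔ m.testBit (idx x) := by simp [ofMask]

lemma ofMask_subset_iff {t s : ℕ} (ht : t < 2 ^ n) :
    ofMask idx t ⊆ ofMask idx s ↔ t &&& s = t := by
  have hbits : t &&& s = t ↔ ∀ i, t.testBit i → s.testBit i := by
    simp [Nat.eq_iff_testBit_eq]
  rw [hbits, forall_testBit_imp_iff (idx := idx) ht]
  simp [subset_iff]

lemma ofMask_injOn : Set.InjOn (ofMask idx) {m | m < 2 ^ n} := fun t ht s hs h => by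
  have hts := (ofMask_subset_iff ht).1 h.subset
  have hst := (ofMask_subset_iff hs).1 h.symm.subset
  rw [← hts, Nat.and_comm, hst]

lemma exists_ofMask_eq (s : Finset α) : ∃ m < 2 ^ n, ofMask idx m = s := by
  classical
  refine ⟨Nat.ofBits fun i => decide (idx.symm i ∈ s), Nat.ofBits_lt_two_pow _, ?_⟩
  ext x
  simp [Nat.testBit_ofBits_lt _ _ (idx x).2]

lemma card_ofMask (m : ℕ) : #(ofMask idx m) = bitCount n m := by
  rw [ofMask, card_filter, bitCount, ← Fin.sum_univ_eq_sum_range, ← idx.sum_comp]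
  exact sum_congr rfl fun x _ => by cases m.testBit (idx x) <;> rfl

/-- The masks closed under passing from an index `i` to the indices in `cov i`. -/
def IsLowerMask (cov : ℕ → List ℕ) (m : ℕ) : Prop :=
  ∀ i, m.testBit i → ∀ j ∈ cov i, m.testBit j

/-- The masks below `2 ^ n` closed under `cov`, when `cov i` only lists indices less than `i`. -/
def lowerMasks (cov : ℕ → List ℕ) : ℕ → List ℕ
  | 0 => [0]
  | n + 1 => ((lowerMasks cov n).filter fun m => ∀ i ∈ cov n, m.testBit i).map (2 ^ n + ·) ++
      lowerMasks cov n

lemma isLowerMask_two_pow_add_iff {cov : ℕ → List ℕ} (hcov : ∀ i, ∀ j ∈ cov i, j < i) {m : ℕ}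
    (hm : m < 2 ^ n) :
    IsLowerMask cov (2 ^ n + m) ↔ IsLowerMask cov m ∧ ∀ j ∈ cov n, m.testBit j := by
  rw [and_comm]
  have hbit (i : ℕ) : (2 ^ n + m).testBit i ↔ i = n ∨ m.testBit i := by
    rw [show 2 ^ n + m = 2 ^ n ||| m by simpa using Nat.two_pow_add_eq_or_of_lt hm 1]
    rw [Nat.testBit_or, Nat.testBit_two_pow, Bool.or_eq_true, decide_eq_true_iff, eq_comm]
  simp only [IsLowerMask, hbit, or_imp, forall_and, forall_eq]
  refine and_congr (forall₂_congr fun j hj => ?_)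
    (forall₂_congr fun i hi => forall₂_congr fun j hj => ?_)
  · simp [(hcov n j hj).ne]
  · simp [((hcov i j hj).trans (lt_of_testBit hm hi)).ne]

lemma mem_lowerMasks {cov : ℕ → List ℕ} (hcov : ∀ i, ∀ j ∈ cov i, j < i) {m : ℕ} :
    m ∈ lowerMasks cov n ↔ m < 2 ^ n ∧ IsLowerMask cov m := by
  induction n generalizing m with
  | zero =>
    simp only [lowerMasks, List.mem_singleton, pow_zero, Nat.lt_one_iff, iff_self_and]
    rintro rfl
    simp [IsLowerMask]
  | succ n ih =>
    simp only [lowerMasks, List.mem_append, List.mem_map, List.mem_filter, decide_eq_true_eq, ih]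
    rcases lt_or_ge m (2 ^ n) with hm | hm
    · have : m < 2 ^ (n + 1) := hm.trans (Nat.pow_lt_pow_succ one_lt_two)
      simp only [hm, this, true_and, or_iff_right_iff_imp]
      rintro ⟨m', -, rfl⟩
      omega
    · obtain ⟨m, rfl⟩ := Nat.exists_eq_add_of_le hm
      simp only [Nat.add_left_cancel_iff, exists_eq_right, hm.not_gt, false_and,
        or_false, pow_succ', two_mul, Nat.add_lt_add_iff_left]
      rw [and_assoc]
      exact and_congr_right fun hm => (isLowerMask_two_pow_add_iff hcov hm).symm

lemma nodup_lowerMasks {cov : ℕ → List ℕ} (hcov : ∀ i, ∀ j ∈ cov i, j < i) (n : ℕ) :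
    (lowerMasks cov n).Nodup := by
  induction n with
  | zero => simp [lowerMasks]
  | succ n ih =>
    refine List.nodup_append.2 ⟨(ih.filter _).map (add_right_injective _), ih, ?_⟩
    rintro _ hm m hm' rfl
    obtain ⟨m', -, rfl⟩ := List.mem_map.1 hm
    have := ((mem_lowerMasks hcov).1 hm').1
    omega

/-- The lists `cov i` of smaller indices determine the order ideals of `α`: a set is an order ideal
as soon as it contains, with the element of index `i`, those with indices in `cov i`. In practice
`cov i` lists the lower covers. -/
structure IsCoverTable [Preorder α] (idx : α ≃ Fin n) (cov : ℕ → List ℕ) : Prop where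
  lt : ∀ i, ∀ j ∈ cov i, j < i
  isLowerSet_iff : ∀ s : Finset α, IsLowerSet (s : Set α) ↔
    ∀ x ∈ s, ∀ y, (idx y : ℕ) ∈ cov (idx x) → y ∈ s

namespace IsCoverTable

variable [Preorder α] {cov : ℕ → List ℕ}

lemma isLowerSet_ofMask_iff (h : IsCoverTable idx cov) {m : ℕ} (hm : m < 2 ^ n) :
    IsLowerSet (ofMask idx m : Set α) ↔ IsLowerMask cov m := by
  rw [h.isLowerSet_iff, IsLowerMask, forall_testBit_imp_iff (idx := idx) hm]
  simp only [mem_ofMask]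
  refine forall₂_congr fun x _ => ⟨fun hx j hj => ?_, fun hx y hy => hx _ hy⟩
  have hjn : j < n := (h.lt _ j hj).trans (idx x).2
  simpa using hx (idx.symm ⟨j, hjn⟩) (by simpa using hj)

lemma mem_lowerMasks_iff (h : IsCoverTable idx cov) {m : ℕ} :
    m ∈ lowerMasks cov n ↔ m < 2 ^ n ∧ IsLowerSet (ofMask idx m : Set α) := by
  rw [mem_lowerMasks h.lt]
  exact and_congr_right fun hm => (h.isLowerSet_ofMask_iff hm).symm

lemma forall_isLowerSet_iff (h : IsCoverTable idx cov) {p : Finset α → Prop} :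
    (∀ s : Finset α, IsLowerSet (s : Set α) → p s) ↔ ∀ m ∈ lowerMasks cov n, p (ofMask idx m) := by
  simp only [h.mem_lowerMasks_iff]
  refine ⟨fun hp m hm => hp _ hm.2, fun hp s hs => ?_⟩
  obtain ⟨m, hm, rfl⟩ := exists_ofMask_eq (idx := idx) s
  exact hp m ⟨hm, hs⟩

open scoped Classical in
lemma sum_isLowerSet {M : Type*} [AddCommMonoid M] (h : IsCoverTable idx cov)
    (f : Finset α → M) :
    ∑ s ∈ ({s | IsLowerSet (s : Set α)} : Finset (Finset α)), f s =
      ((lowerMasks cov n).map fun m => f (ofMask idx m)).sum := by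
  rw [← List.sum_toFinset _ (nodup_lowerMasks h.lt n)]
  refine (sum_nbij (ofMask idx) (fun m hm => ?_) (fun m hm m' hm' heq => ?_) (fun s hs => ?_)
    fun _ _ => rfl).symm
  · simpa using (h.mem_lowerMasks_iff.1 (List.mem_toFinset.1 hm)).2
  · exact ofMask_injOn (h.mem_lowerMasks_iff.1 (List.mem_toFinset.1 hm)).1
      (h.mem_lowerMasks_iff.1 (List.mem_toFinset.1 hm')).1 heq
  · obtain ⟨m, hm, rfl⟩ := exists_ofMask_eq (idx := idx) s
    exact ⟨m, by simpa [h.mem_lowerMasks_iff, hm] using hs, rfl⟩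

end IsCoverTable

end BitMasks

section Evaluation

/-- `f n`, written so that kernel reduction, which is by name, first evaluates `n`. -/
def withValue {β : Type*} (n : ℕ) (f : ℕ → β) : β :=
  match n with
  | 0 => f 0
  | n + 1 => f (n + 1)

lemma withValue_eq {β : Type*} (n : ℕ) (f : ℕ → β) : withValue n f = f n := by
  cases n <;> rfl

/-- `f l`, written so that kernel reduction first evaluates all entries of `l`. -/
def withValues {β : Type*} : List ℕ → (List ℕ → β) → β
  | [], f => f []
  | n :: l, f => withValue n fun n => withValues l fun l => f (n :: l)

lemma withValues_eq {β : Type*} (l : List ℕ) (f : List ℕ → β) : withValues l f = f l := by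
  induction l generalizing f with
  | nil => rfl
  | cons n l ih => rw [withValues, withValue_eq, ih]

/-- `f (List.iterate step l n)`, written so that kernel reduction first evaluates the iterates. -/
def withIterates {β : Type*} (step : List ℕ → List ℕ) :
    ℕ → List ℕ → (List (List ℕ) → β) → β
  | 0, _, f => f []
  | n + 1, l, f => withValues l fun l => withIterates step n (step l) fun ls => f (l :: ls)

lemma withIterates_eq {β : Type*} (step : List ℕ → List ℕ) (n : ℕ) (l : List ℕ)
    (f : List (List ℕ) → β) : withIterates step n l f = f (List.iterate step l n) := by
  induction n generalizing l f with
  | zero => rfl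
  | succ n ih => rw [withIterates, withValues_eq, ih, List.iterate]

/-- The pairing `∑ xᵢ * yᵢ` of two lists. -/
def dot (xs ys : List ℕ) : ℕ := (List.zipWith (· * ·) xs ys).sum

/-- The transfer operator on the list of values at the masks `M`, with weights `ws`. -/
def transferStep (M ws ys : List ℕ) : List ℕ :=
  withValues (List.zipWith (· * ·) ws ys) fun zs =>
    M.map fun s => (List.zipWith (fun t z => if t &&& s = t then z else 0) M zs).sum

/-- The adjoint of `transferStep M ws` for the pairing `dot`. -/
def adjointStep (M ws xs : List ℕ) : List ℕ :=
  List.zipWith (· * ·) ws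
    (M.map fun t => (List.zipWith (fun s x => if t &&& s = t then x else 0) M xs).sum)

lemma dot_map (M : List ℕ) (x y : ℕ → ℕ) :
    dot (M.map x) (M.map y) = (M.map fun s => x s * y s).sum := by
  simp only [dot, List.zipWith_map_left, List.zipWith_map_right, List.zipWith_self]

lemma transferStep_map (M : List ℕ) (w y : ℕ → ℕ) :
    transferStep M (M.map w) (M.map y) =
      M.map fun s => (M.map fun t => if t &&& s = t then w t * y t else 0).sum := by
  simp only [transferStep, withValues_eq, List.zipWith_map_left, List.zipWith_map_right,
    List.zipWith_self]

lemma adjointStep_map (M : List ℕ) (w x : ℕ → ℕ) :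
    adjointStep M (M.map w) (M.map x) =
      M.map fun t => w t * (M.map fun s => if t &&& s = t then x s else 0).sum := by
  simp only [adjointStep, List.zipWith_map_left, List.zipWith_map_right, List.zipWith_self]

lemma dot_adjointStep (M : List ℕ) (w x y : ℕ → ℕ) :
    dot (adjointStep M (M.map w) (M.map x)) (M.map y) =
      dot (M.map x) (transferStep M (M.map w) (M.map y)) := by
  rw [adjointStep_map, transferStep_map, dot_map, dot_map]
  calc (M.map fun t => w t * (M.map fun s => if t &&& s = t then x s else 0).sum * y t).sum
      = (M.map fun t => (M.map fun s => if t &&& s = t then x s * (w t * y t) else 0).sum).sum := by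
        simp only [← List.sum_map_mul_left, mul_ite, mul_zero, mul_comm, mul_left_comm]
    _ = (M.map fun s => (M.map fun t => if t &&& s = t then x s * (w t * y t) else 0).sum).sum :=
        Multiset.sum_map_sum_map (M : Multiset ℕ) (M : Multiset ℕ)
    _ = (M.map fun s => x s * (M.map fun t => if t &&& s = t then w t * y t else 0).sum).sum := by
        simp only [← List.sum_map_mul_left, mul_ite, mul_zero]

variable {α : Type*} [Fintype α] [DecidableEq α] [Preorder α] {n : ℕ} {idx : α ≃ Fin n}
  {cov : ℕ → List ℕ}

open scoped Classical in
lemma transferStep_lowerMasks (h : IsCoverTable idx cov) {𝓕 : Finset (Finset α)}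
    (h𝓕 : ∀ t ∈ 𝓕, IsLowerSet (t : Set α)) {ω : ℕ → ℕ} {w : Finset α → ℕ}
    (hω : ∀ m ∈ lowerMasks cov n, ω m = if ofMask idx m ∈ 𝓕 then w (ofMask idx m) else 0)
    (f : Finset α → ℕ) :
    transferStep (lowerMasks cov n) ((lowerMasks cov n).map ω)
        ((lowerMasks cov n).map (f ∘ ofMask idx)) =
      (lowerMasks cov n).map (transfer w 𝓕 f ∘ ofMask idx) := by
  have hfilter (s : Finset α) : transfer w 𝓕 f s =
      ∑ t ∈ ({t | IsLowerSet (t : Set α)} : Finset (Finset α)),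
        if t ⊆ s then (if t ∈ 𝓕 then w t else 0) * f t else 0 := by
    rw [transfer, sum_filter]
    calc ∑ t ∈ 𝓕, (if t ⊆ s then w t * f t else 0)
        = ∑ t ∈ 𝓕, if t ⊆ s then (if t ∈ 𝓕 then w t else 0) * f t else 0 :=
          sum_congr rfl fun t ht => by rw [if_pos ht]
      _ = _ := sum_subset (fun t ht => by simpa using h𝓕 t ht) fun t _ ht => by simp [ht]
  rw [transferStep_map]
  refine List.map_congr_left fun s _ => ?_
  rw [Function.comp_apply, hfilter, h.sum_isLowerSet]
  refine congrArg List.sum (List.map_congr_left fun t ht => ?_)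
  simp [hω t ht, ofMask_subset_iff (h.mem_lowerMasks_iff.1 ht).1]

lemma iterate_transferStep_lowerMasks (h : IsCoverTable idx cov) {𝓕 : Finset (Finset α)}
    (h𝓕 : ∀ t ∈ 𝓕, IsLowerSet (t : Set α)) {ω : ℕ → ℕ} {w : Finset α → ℕ}
    (hω : ∀ m ∈ lowerMasks cov n, ω m = if ofMask idx m ∈ 𝓕 then w (ofMask idx m) else 0)
    (f : Finset α → ℕ) (b : ℕ) :
    (transferStep (lowerMasks cov n) ((lowerMasks cov n).map ω))^[b]
        ((lowerMasks cov n).map (f ∘ ofMask idx)) =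
      (lowerMasks cov n).map ((transfer w 𝓕)^[b] f ∘ ofMask idx) := by
  induction b with
  | zero => rfl
  | succ b ih =>
    rw [Function.iterate_succ_apply', Function.iterate_succ_apply', ih,
      transferStep_lowerMasks h h𝓕 hω]

lemma dot_iterate_adjointStep_lowerMasks (h : IsCoverTable idx cov) {𝓕 : Finset (Finset α)}
    (h𝓕 : ∀ t ∈ 𝓕, IsLowerSet (t : Set α)) {ω : ℕ → ℕ} {w : Finset α → ℕ}
    (hω : ∀ m ∈ lowerMasks cov n, ω m = if ofMask idx m ∈ 𝓕 then w (ofMask idx m) else 0)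
    (x : ℕ → ℕ) (f : Finset α → ℕ) (a : ℕ) :
    dot ((adjointStep (lowerMasks cov n) ((lowerMasks cov n).map ω))^[a] ((lowerMasks cov n).map x))
        ((lowerMasks cov n).map (f ∘ ofMask idx)) =
      dot ((lowerMasks cov n).map x)
        ((lowerMasks cov n).map ((transfer w 𝓕)^[a] f ∘ ofMask idx)) := by
  induction a generalizing x with
  | zero => rfl
  | succ a ih =>
    rw [Function.iterate_succ_apply, adjointStep_map, ih, ← adjointStep_map, dot_adjointStep,
      transferStep_lowerMasks h h𝓕 hω, Function.iterate_succ_apply']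

end Evaluation

section Grid

/-- The weight at `q` of the mask `m` for the family of ideals containing the index `i`. -/
def weightWith (n i k q m : ℕ) : ℕ := if m.testBit i then q ^ (bitCount n m - k) else 0

/-- The weight at `q` of the mask `m` for the family of ideals avoiding the index `i`. -/
def weightWithout (n i q m : ℕ) : ℕ := if !m.testBit i then q ^ bitCount n m else 0

variable {α : Type*} [Fintype α] [DecidableEq α] [Preorder α] {n : ℕ} {idx : α ≃ Fin n}
  {cov : ℕ → List ℕ} {u v : α} {k : ℕ}

theorem rankGF_eq_dot (h : IsCoverTable idx cov) (hk : ∀ t ∈ idealsWith u, k ≤ #t) (q a b : ℕ) :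
    rankGF u v k q a b =
      dot ((adjointStep (lowerMasks cov n) ((lowerMasks cov n).map (weightWith n (idx u) k q)))^[a]
          ((lowerMasks cov n).map fun m => if m = 2 ^ n - 1 then 1 else 0))
        ((transferStep (lowerMasks cov n)
          ((lowerMasks cov n).map (weightWithout n (idx v) q)))^[b]
            ((lowerMasks cov n).map fun _ => 1)) := by
  classical
  have hfull : ofMask idx (2 ^ n - 1) = univ := by ext x; simp
  have hfull_mem : 2 ^ n - 1 ∈ lowerMasks cov n :=
    h.mem_lowerMasks_iff.2 ⟨Nat.sub_lt (Nat.two_pow_pos n) one_pos, by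
      rw [hfull, coe_univ]; exact isLowerSet_univ⟩
  have hwith : ∀ m ∈ lowerMasks cov n, weightWith n (idx u) k q m =
      if ofMask idx m ∈ idealsWith u then q ^ (#(ofMask idx m) - k) else 0 := fun m hm => by
    simp [weightWith, mem_idealsWith, (h.mem_lowerMasks_iff.1 hm).2, card_ofMask]
  have hwithout : ∀ m ∈ lowerMasks cov n, weightWithout n (idx v) q m =
      if ofMask idx m ∈ idealsWithout v then q ^ #(ofMask idx m) else 0 := fun m hm => by
    simp [weightWithout, mem_idealsWithout, (h.mem_lowerMasks_iff.1 hm).2, card_ofMask]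
  have hones := iterate_transferStep_lowerMasks h (w := fun t => q ^ #t)
    (fun t ht => (mem_idealsWithout.1 ht).1) hwithout 1 b
  rw [Pi.one_comp] at hones
  rw [rankGF, sum_labellings_eq_transfer hk, ← Pi.one_def, hones,
    dot_iterate_adjointStep_lowerMasks h (w := fun t => q ^ (#t - k))
      (fun t ht => (mem_idealsWith.1 ht).1) hwith, dot_map,
    List.sum_map_eq_nsmul_single (2 ^ n - 1) _ fun m hm _ => by simp [hm],
    List.count_eq_one_of_mem (nodup_lowerMasks h.lt n) hfull_mem]
  simp [hfull]

/-- Whether the product formula for `rankGF` holds for `a ≤ g` and `b ≤ g + 1` at the natural number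
`q`, according to the iterates of the transfer operators on masks. -/
def checkGrid (cov : ℕ → List ℕ) (n i j k g : ℕ) (A B : List ℕ) (q : ℕ) : Bool :=
  withValues (lowerMasks cov n) fun M =>
  withValues (M.map (weightWith n i k q)) fun wsA =>
  withValues (M.map (weightWithout n j q)) fun wsB =>
  withIterates (adjointStep M wsA) (g + 1) (M.map fun m => if m = 2 ^ n - 1 then 1 else 0) fun xs =>
  withIterates (transferStep M wsB) (g + 2) (M.map fun _ => 1) fun ys =>
  withValue (weylNumerator A B (fun m => (q ^ m - 1) / (q - 1)) 0 0) fun d =>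
  decide (∀ a < g + 1, ∀ b < g + 2, dot (xs.getD a []) (ys.getD b []) * d =
    weylNumerator A B (fun m => (q ^ m - 1) / (q - 1)) a b)

theorem rankGF_mul_eq_of_checkGrid (h : IsCoverTable idx cov) (hk : ∀ t ∈ idealsWith u, k ≤ #t)
    {g q : ℕ} {A B : List ℕ} (hq : 2 ≤ q)
    (hcheck : checkGrid cov n (idx u) (idx v) k g A B q) {a b : ℕ} (ha : a < g + 1)
    (hb : b < g + 2) :
    rankGF u v k q a b * weylNumerator A B (qNat q) 0 0 = weylNumerator A B (qNat q) a b := by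
  have hqNat : (fun m => (q ^ m - 1) / (q - 1)) = qNat q :=
    funext fun m => (Nat.geomSum_eq hq m).symm
  simp only [checkGrid, withValues_eq, withIterates_eq, withValue_eq, hqNat,
    decide_eq_true_eq] at hcheck
  have hab := hcheck a ha b hb
  rw [List.getD_eq_getElem _ _ (by rwa [List.length_iterate]), List.getElem_iterate,
    List.getD_eq_getElem _ _ (by rwa [List.length_iterate]), List.getElem_iterate] at hab
  rwa [rankGF_eq_dot h hk]

end Grid

section Positions

variable {N : Type} {adj : N → N → Prop} {pos : Finset (N × ℕ)}

/-- The condition `c v ≤ a ≤ c u` on labellings; `extra6` is the case of the positions `(1', 6)` and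
`(1', 8)` of `P24`. -/
def Separates (u v : {x // x ∈ pos}) (a : ℕ) (c : {x // x ∈ pos} → ℕ) : Prop :=
  c v ≤ a ∧ a ≤ c u

variable [Preorder {x // x ∈ pos}]

lemma isLowerSet_iff_step (hle : ∀ x y : {x // x ∈ pos}, x ≤ y ↔ CL.ple adj pos x y)
    {s : Set {x // x ∈ pos}} :
    IsLowerSet s ↔ ∀ x ∈ s, ∀ y : {x // x ∈ pos}, CL.step adj pos y x → y ∈ s := by
  constructor
  · exact fun hs x hx y hyx => hs ((hle y x).2 (.single hyx)) hx
  · rintro hs x ⟨y, hy⟩ hyx hx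
    have hple : CL.ple adj pos y x := (hle _ _).1 hyx
    clear hyx
    induction hple using Relation.ReflTransGen.head_induction_on with
    | refl => exact hx
    | head hstep _ ih => exact hs _ (ih hstep.2.1) _ hstep

variable [DecidableEq N]

lemma mem_labellings_univ (hle : ∀ x y : {x // x ∈ pos}, x ≤ y ↔ CL.ple adj pos x y)
    {u v : {x // x ∈ pos}} {a b : ℕ} {c : {x // x ∈ pos} → ℕ} :
    c ∈ labellings u v a b univ ↔ (∀ x, c x ≤ a + b) ∧
      (∀ x y : {x // x ∈ pos}, CL.ple adj pos y x → c x ≤ c y) ∧ Separates u v a c := by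
  have hanti : Antitone c ↔ ∀ x y : {x // x ∈ pos}, CL.ple adj pos y x → c x ≤ c y := by
    simp only [← hle]
    exact ⟨fun h x y hyx => h hyx, fun h x y hxy => h y x hxy⟩
  simp only [mem_labellings, hanti, subset_univ, and_true, Separates]

theorem sum_pow_rk_eq_rankGF (hle : ∀ x y : {x // x ∈ pos}, x ≤ y ↔ CL.ple adj pos x y)
    {u v : {x // x ∈ pos}} {k : ℕ}
    (hk : IsLeast (card '' (idealsWith u : Set (Finset {x // x ∈ pos}))) k)
    {R : Type*} [CommSemiring R] (q : R) (a b : ℕ) :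
    ∑ t : CL.Elt adj pos (a + b) (Separates u v a),
      q ^ (CL.rk t - sInf (Set.range (CL.rk : CL.Elt adj pos (a + b) (Separates u v a) → ℕ))) =
        rankGF u v k q a b := by
  have hrange : Set.range (CL.rk : CL.Elt adj pos (a + b) (Separates u v a) → ℕ) =
      (fun c => ∑ x, c x) '' (labellings u v a b univ : Set ({x // x ∈ pos} → ℕ)) := by
    ext r
    simp only [Set.mem_range, Set.mem_image, mem_coe, mem_labellings_univ hle]
    exact Subtype.exists.trans
      (exists_congr fun c => ⟨fun ⟨hc, hr⟩ => ⟨hc, hr⟩, fun ⟨hc, hr⟩ => ⟨hc, hr⟩⟩)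
  rw [hrange, (isLeast_sum_labellings hk).csInf_eq]
  exact (sum_subtype (F := CL.instFintypeElt) _ (fun c => mem_labellings_univ hle)
    fun c => q ^ (∑ x, c x - k * a)).symm

end Positions

section E6

/-- The order of the positions of `P24`, generated by `CL.step`. -/
instance : Preorder {x // x ∈ pos24} where
  le x y := CL.ple adj6 pos24 x y
  le_refl _ := .refl
  le_trans _ _ _ := .trans

/-- The positions of `P24`, by increasing rank. -/
def positions6 : List (N6 × ℕ) :=
  [(m1, 0), (m2, 1), (m3, 2), (m4, 3), (m5, 3), (m3, 4), (m6, 4), (m2, 5), (m5, 5),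
   (m1, 6), (m3, 6), (m2, 7), (m4, 7), (m1, 8), (m3, 8), (m2, 9), (m5, 9), (m3, 10),
   (m6, 10), (m4, 11), (m5, 11), (m3, 12), (m2, 13), (m1, 14)]

/-- The numbering of the positions of `P24` in the order of `positions6`. -/
def index6 : {x // x ∈ pos24} ≃ Fin 24 :=
  (Equiv.subtypeEquivRight fun _ => by simp [pos24, positions6]).trans
    (List.Nodup.getEquiv positions6 (by decide)).symm

/-- The indices of the lower covers of the position of index `i` in `P24`. -/
def lowerCovers6 (i : ℕ) : List ℕ :=
  [[], [0], [1], [2], [2], [3, 4], [4], [5], [5, 6], [7], [7, 8], [9, 10], [10], [11], [11, 12],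
    [13, 14], [14], [15, 16], [16], [17], [17, 18], [19, 20], [21], [22]].getD i []

lemma step_iff_mem_lowerCovers6 (x y : {x // x ∈ pos24}) :
    CL.step adj6 pos24 y x ↔ (index6 y : ℕ) ∈ lowerCovers6 (index6 x) := by
  have htable : ∀ i j : Fin 24,
      adj6 (index6.symm j).1.1 (index6.symm i).1.1 ∧
        (index6.symm i).1.2 = (index6.symm j).1.2 + 1 ↔ (j : ℕ) ∈ lowerCovers6 i := by
    decide +kernel
  simpa [CL.step, x.2, y.2] using htable (index6 x) (index6 y)

lemma isCoverTable_lowerCovers6 : IsCoverTable index6 lowerCovers6 where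
  lt i := by
    rcases lt_or_ge i 24 with hi | hi
    · exact (by decide : ∀ i < 24, ∀ j ∈ lowerCovers6 i, j < i) i hi
    · rw [lowerCovers6, List.getD_eq_default _ _ hi]
      simp
  isLowerSet_iff s := by
    rw [isLowerSet_iff_step (adj := adj6) fun _ _ => Iff.rfl]
    simp only [step_iff_mem_lowerCovers6, mem_coe]

/-- The position `(1', 6)`, where the labels are at least `a`. -/
def node1Rank6 : {x // x ∈ pos24} := ⟨(m1, 6), by decide⟩

/-- The position `(1', 8)`, where the labels are at most `a`. -/
def node1Rank8 : {x // x ∈ pos24} := ⟨(m1, 8), by decide⟩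

lemma isLeast_card_idealsWith6 :
    IsLeast (card '' (idealsWith node1Rank6 : Set (Finset {x // x ∈ pos24}))) 8 := by
  have hmin : ∀ m ∈ lowerMasks lowerCovers6 24,
      m.testBit (index6 node1Rank6) → 8 ≤ bitCount 24 m := by decide +kernel
  -- The mask `703 = 0b1010111111` is the principal ideal of `(1', 6)`.
  refine ⟨⟨ofMask index6 703, mem_idealsWith.2 ⟨?_, ?_⟩, ?_⟩, ?_⟩
  · exact (isCoverTable_lowerCovers6.mem_lowerMasks_iff.1 (by decide +kernel)).2
  · exact mem_ofMask.2 (by decide +kernel)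
  · rw [card_ofMask]
    decide +kernel
  · rintro _ ⟨t, ht, rfl⟩
    obtain ⟨hlower, hmem⟩ := mem_idealsWith.1 ht
    have hcard : ∀ s : Finset {x // x ∈ pos24}, IsLowerSet (s : Set {x // x ∈ pos24}) →
        node1Rank6 ∈ s → 8 ≤ #s := by
      rw [isCoverTable_lowerCovers6.forall_isLowerSet_iff]
      simpa only [mem_ofMask, card_ofMask] using hmin
    exact hcard t hlower hmem

lemma card_le_of_mem_idealsWithout6 {t : Finset {x // x ∈ pos24}}
    (ht : t ∈ idealsWithout node1Rank8) : #t ≤ 16 := by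
  have hmax : ∀ m ∈ lowerMasks lowerCovers6 24,
      ¬m.testBit (index6 node1Rank8) → bitCount 24 m ≤ 16 := by decide +kernel
  obtain ⟨hlower, hnot_mem⟩ := mem_idealsWithout.1 ht
  have hcard : ∀ s : Finset {x // x ∈ pos24}, IsLowerSet (s : Set {x // x ∈ pos24}) →
      node1Rank8 ∉ s → #s ≤ 16 := by
    rw [isCoverTable_lowerCovers6.forall_isLowerSet_iff]
    simpa only [mem_ofMask, card_ofMask] using hmax
  exact hcard t hlower hnot_mem

-- The base `3 ^ 120` exceeds the bounds required by `rankGF_mul_eq_of_nat` on the whole grid. A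
-- power of two is much slower to check: the kernel hashes a numeral modulo `2 ^ 64`, so that almost
-- all intermediate values would collide.
lemma checkGrid6 : checkGrid lowerCovers6 24 (index6 node1Rank6) (index6 node1Rank8) 8 16 NA NB
    (3 ^ 120) := by
  decide +kernel

theorem rankGF6_mul_eq {R : Type*} [CommRing R] (q : R) (a b : ℕ) :
    rankGF node1Rank6 node1Rank8 8 q a b * weylNumerator NA NB (qNat q) 0 0 =
      weylNumerator NA NB (qNat q) a b := by
  have hcard : Fintype.card {x // x ∈ pos24} = 24 := by
    rw [Fintype.card_congr index6, Fintype.card_fin]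
  have hk : ∀ t ∈ idealsWith node1Rank6, 8 ≤ #t := fun t ht =>
    isLeast_card_idealsWith6.2 ⟨t, ht, rfl⟩
  have hbound : ∀ a < 17, ∀ b < 18, (a + b + 1) ^ 24 * weylNumerator NA NB id 0 0 < 3 ^ 120 ∧
      weylNumerator NA NB id a b < 3 ^ 120 := by decide +kernel
  refine rankGF_mul_eq_of_grid (n := 16) hk (by rw [hcard]) (fun _ => card_le_of_mem_idealsWithout6)
    (by decide) q (fun a ha b hb => ?_) a b
  exact rankGF_mul_eq_of_nat (N := 3 ^ 120) (hcard ▸ (hbound a ha b hb).1) (hbound a ha b hb).2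
    (rankGF_mul_eq_of_checkGrid isCoverTable_lowerCovers6 hk (by norm_num) checkGrid6 ha hb) q

end E6

end RankGF

/-- the normalized rank generating function identity for `L6(a,b)`. -/
theorem statement_17 (a b : ℕ) :
    (∑ t : L6ab a b, (Polynomial.X : Polynomial ℤ) ^
        (CL.rk t - sInf (Set.range fun s : L6ab a b => CL.rk s))) *
      ((NA.map qint).prod * (NB.map qint).prod * (NA.map qint).prod) =
    (NA.map fun m => qint (a + m)).prod * (NB.map fun m => qint (a + b + m)).prod *
      (NA.map fun m => qint (b + m)).prod := by
  have hrank : ∑ t : L6ab a b, (Polynomial.X : Polynomial ℤ) ^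
      (CL.rk t - sInf (Set.range fun s : L6ab a b => CL.rk s)) =
        RankGF.rankGF RankGF.node1Rank6 RankGF.node1Rank8 8 Polynomial.X a b :=
    RankGF.sum_pow_rk_eq_rankGF (fun _ _ => Iff.rfl) RankGF.isLeast_card_idealsWith6 _ a b
  have hdenominator : (NA.map qint).prod * (NB.map qint).prod * (NA.map qint).prod =
      RankGF.weylNumerator NA NB (RankGF.qNat Polynomial.X) 0 0 := by
    simp only [RankGF.weylNumerator, Nat.zero_add]
    rfl
  rw [hrank, hdenominator]
  exact RankGF.rankGF6_mul_eq Polynomial.X a b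

end
end

section
/- Fix nonnegative integers a and b, let ℓ := 16(a+b), and for 0 ≤ i ≤ ℓ let N_i := #{t ∈ L6(a,b) : ρ(t) − ρ₀ = i}. Then every t ∈ L6(a,b) satisfies 0 ≤ ρ(t) − ρ₀ ≤ ℓ, and: (i) L6(a,b) is rank symmetric: N_i = N_{ℓ−i} for all 0 ≤ i ≤ ℓ; (ii) L6(a,b) is rank unimodal: there exists u with N_0 ≤ N_1 ≤ … ≤ N_u ≥ N_{u+1} ≥ … ≥ N_ℓ; (iii) L6(a,b) is strongly Sperner: for every positive integer m and all antichains A_1, …, A_m of L6(a,b), the cardinality of A_1 ∪ … ∪ A_m is at most the maximum, over m-element subsets S of {0,1,…,ℓ}, of Σ_{i∈S} N_i. -/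
noncomputable section

open N6

/-- The minimum rank `ρ₀` over `L6(a,b)`. -/
def rho0 (a b : ℕ) : ℕ := sInf (Set.range fun t : L6ab a b => CL.rk t)

/-- The number of elements of `L6(a,b)` of normalized rank `i`. -/
def nrk6 (a b i : ℕ) : ℕ := Nat.card {t : L6ab a b // CL.rk t - rho0 a b = i}

/-!
Give the step from a labelling `c` to `c + 1` at the position `p` a nonnegative weight, and let `X`
be the sum of all steps, scaled by square roots of the weights. The weights are rational functions
of the labels, as in a Gelfand–Tsetlin basis, chosen so that `X * Xᵀ - Xᵀ * X` is the diagonal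
matrix with entries `2 * (ρ - ρ₀) - 16 * (a + b)`. Off the diagonal, the products of the weights
around every parallelogram cancel. On the diagonal, the weights of the steps into and out of `c` at
the positions of one color are, up to sign, the residues of one rational function, so their signed
sum is the next-to-leading coefficient of its numerator minus that of its denominator, which is
linear in the labels. That these weights are nonnegative and vanish at the boundary uses that `P24`,
framed by three positions carrying the constant labels `a + b`, `a` and `0`, is the minuscule poset
of type `E₇`.

So `X` is the raising operator of an action of `sl₂` on the functions on the lattice. By positivity
of `Xᵀ * X`, its powers are injective on the lower half and surjective on the upper half of the
ranks, which gives symmetry and unimodality. It also shows that the rank of `X ^ m` is at least the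
number of elements outside the `m` middle ranks. As `X` moves strictly upward in the order, `m`
applications of `X` peel off a union of `m` antichains, one layer of minimal elements at a time, so
the rank of `X ^ m` is at most the number of elements outside this union.
-/

namespace Peck

open Matrix Finset

/-! ### Raising operators on graded posets -/

section Chains

variable {α : Type*} [PartialOrder α]

lemma card_le_of_isChain_of_isAntichain {ι : Type*} [Fintype ι] {A : ι → Set α}
    (hA : ∀ i, IsAntichain (· ≤ ·) (A i)) {C : Finset α} (hC : IsChain (· ≤ ·) (C : Set α))
    (hCA : ∀ x ∈ C, ∃ i, x ∈ A i) : #C ≤ Fintype.card ι := by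
  choose f hf using fun x : C => hCA x x.2
  rw [← Fintype.card_coe]
  refine Fintype.card_le_of_injective f fun x y hxy => Subtype.ext ?_
  exact inter_subsingleton_of_isChain_of_isAntichain hC (hA (f x)) ⟨x.2, hf x⟩
    ⟨y.2, hxy ▸ hf y⟩

lemma card_chain_le_of_forall_exists_lt {F : Finset α} {m : ℕ}
    (hF : ∀ C ⊆ F, IsChain (· ≤ ·) (C : Set α) → #C ≤ m + 1) {C : Finset α} (hCF : C ⊆ F)
    (hlt : ∀ x ∈ C, ∃ f ∈ F, f < x) (hC : IsChain (· ≤ ·) (C : Set α)) : #C ≤ m := by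
  classical
  rcases C.eq_empty_or_nonempty with rfl | hne
  · simp
  obtain ⟨x, hx⟩ := C.exists_minimal hne
  obtain ⟨f, hf, hfx⟩ := hlt x hx.prop
  have hfC : ∀ y ∈ C, f < y := fun y hy => by
    rcases hC.total hx.prop hy with hxy | hyx
    · exact hfx.trans_le hxy
    · exact hfx.trans_le (hx.le_of_le hy hyx)
  have hchain : IsChain (· ≤ ·) ((insert f C : Finset α) : Set α) := by
    rw [coe_insert]
    exact hC.insert fun y hy _ => Or.inl (hfC y hy).le
  have hcard := hF (insert f C) (insert_subset hf hCF) hchain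
  rwa [card_insert_of_notMem fun hfmem => (hfC f hfmem).false, add_le_add_iff_right] at hcard

end Chains

section Rank

variable {l m n K : Type*} [Fintype n] [Field K]

lemma rank_add_le [Finite m] (M N : Matrix m n K) : (M + N).rank ≤ M.rank + N.rank := by
  have hrange : LinearMap.range (M + N).mulVecLin ≤
      LinearMap.range M.mulVecLin ⊔ LinearMap.range N.mulVecLin := by
    rw [mulVecLin_add]
    exact LinearMap.range_add_le _ _
  exact (Submodule.finrank_mono hrange).trans
    (Submodule.finrank_add_le_finrank_add_finrank _ _)

lemma rank_le_rank_of_ker_le {M : Matrix m n K} {N : Matrix l n K}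
    (h : ∀ v, M *ᵥ v = 0 → N *ᵥ v = 0) : N.rank ≤ M.rank := by
  have hker : LinearMap.ker M.mulVecLin ≤ LinearMap.ker N.mulVecLin := fun v hv => h v hv
  have hM := M.mulVecLin.finrank_range_add_finrank_ker
  have hN := N.mulVecLin.finrank_range_add_finrank_ker
  have hle := Submodule.finrank_mono hker
  simp only [Matrix.rank]
  lia

end Rank

variable {α : Type*}

/-- The projection of `α → ℝ` onto the functions supported on `s`. -/
def coordProj [DecidableEq α] (s : Finset α) : Matrix α α ℝ :=
  diagonal fun t => if t ∈ s then 1 else 0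

lemma coordProj_sdiff_add [DecidableEq α] {s t : Finset α} (hst : s ⊆ t) :
    coordProj (t \ s) + coordProj s = coordProj t := by
  rw [coordProj, coordProj, coordProj, diagonal_add]
  congr 1 with u
  grind

/-- The matrix `M` maps functions supported on `{h = c}` to functions supported on
`{h = c + d}`. -/
def ShiftsBy (h : α → ℝ) (d : ℝ) (M : Matrix α α ℝ) : Prop :=
  ∀ s t, M s t ≠ 0 → h s = h t + d

lemma ShiftsBy.transpose {h : α → ℝ} {d : ℝ} {M : Matrix α α ℝ} (hM : ShiftsBy h d M) :
    ShiftsBy h (-d) Mᵀ := fun s t hst => by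
  rw [hM t s hst]; ring

variable [Fintype α]

lemma ShiftsBy.mul {h : α → ℝ} {d e : ℝ} {M N : Matrix α α ℝ} (hM : ShiftsBy h d M)
    (hN : ShiftsBy h e N) : ShiftsBy h (d + e) (M * N) := by
  intro s t hst
  obtain ⟨u, -, hu⟩ := exists_ne_zero_of_sum_ne_zero (mul_apply (M := M) ▸ hst)
  rw [hM s u (left_ne_zero_of_mul hu), hN u t (right_ne_zero_of_mul hu)]; ring

lemma ShiftsBy.exists_of_mulVec_ne_zero {h : α → ℝ} {d : ℝ} {M : Matrix α α ℝ}
    (hM : ShiftsBy h d M) {v : α → ℝ} {s : α} (hs : (M *ᵥ v) s ≠ 0) :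
    ∃ t, v t ≠ 0 ∧ h s = h t + d := by
  obtain ⟨t, -, ht⟩ := exists_ne_zero_of_sum_ne_zero hs
  exact ⟨t, right_ne_zero_of_mul ht, hM s t (left_ne_zero_of_mul ht)⟩

lemma dotProduct_transpose_mul_self (M : Matrix α α ℝ) (v : α → ℝ) :
    v ⬝ᵥ ((Mᵀ * M) *ᵥ v) = (M *ᵥ v) ⬝ᵥ (M *ᵥ v) := by
  rw [← mulVec_mulVec, dotProduct_mulVec, vecMul_transpose]

lemma card_weight_eq {r : α → ℕ} {l : ℕ} {c : ℝ} {k : ℕ} (hc : c = 2 * k - l) :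
    #{t | 2 * (r t : ℝ) - l = c} = #{t | r t = k} := by
  simp [hc]

variable [DecidableEq α]

lemma ShiftsBy.pow {h : α → ℝ} {d : ℝ} {M : Matrix α α ℝ} (hM : ShiftsBy h d M) (n : ℕ) :
    ShiftsBy h (n * d) (M ^ n) := by
  induction n with
  | zero =>
    intro s t hst
    have hst : s = t := by_contra fun hne => hst (by rw [pow_zero, one_apply_ne hne])
    simp [hst]
  | succ n ih =>
    rw [pow_succ]
    convert ih.mul hM using 1
    push_cast; ring

lemma ShiftsBy.diagonal_mul_comm {h : α → ℝ} {d : ℝ} {M : Matrix α α ℝ} (hM : ShiftsBy h d M)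
    (f : ℝ → ℝ) : (diagonal fun t => f (h t)) * M = M * diagonal fun t => f (h t + d) := by
  ext s t
  rw [diagonal_mul, mul_diagonal]
  by_cases hst : M s t = 0
  · simp [hst]
  · rw [hM s t hst, mul_comm]

lemma mulVec_eq_zero_of_gram_eq_diagonal {M : Matrix α α ℝ} {v c : α → ℝ}
    (hv : (Mᵀ * M) *ᵥ v = diagonal c *ᵥ v) (hc : ∀ t, v t ≠ 0 → c t ≤ 0) : M *ᵥ v = 0 := by
  refine dotProduct_self_eq_zero.mp (le_antisymm ?_ (sum_nonneg fun t _ => mul_self_nonneg _))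
  rw [← dotProduct_transpose_mul_self, hv]
  refine sum_nonpos fun t _ => ?_
  rw [mulVec_diagonal]
  rcases eq_or_ne (v t) 0 with h0 | h0
  · simp [h0]
  · nlinarith [hc t h0, sq_nonneg (v t)]

lemma eq_zero_of_diagonal_mulVec_eq_zero {v c : α → ℝ} (hv : diagonal c *ᵥ v = 0)
    (hc : ∀ t, v t ≠ 0 → c t ≠ 0) : v = 0 := by
  funext t
  by_contra ht
  exact mul_ne_zero (hc t ht) ht (by rw [← mulVec_diagonal, hv]; rfl)

lemma coordProj_mulVec_apply (s : Finset α) (v : α → ℝ) (t : α) :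
    (coordProj s *ᵥ v) t = if t ∈ s then v t else 0 := by
  simp [coordProj, mulVec_diagonal]

lemma coordProj_mul_apply (s : Finset α) (M : Matrix α α ℝ) (t u : α) :
    (coordProj s * M) t u = if t ∈ s then M t u else 0 := by
  simp [coordProj, diagonal_mul]

lemma mul_coordProj_apply (M : Matrix α α ℝ) (s : Finset α) (t u : α) :
    (M * coordProj s) t u = if u ∈ s then M t u else 0 := by
  simp [coordProj, mul_diagonal]

lemma mem_of_coordProj_mulVec_ne_zero {s : Finset α} {v : α → ℝ} {t : α}
    (ht : (coordProj s *ᵥ v) t ≠ 0) : t ∈ s := by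
  by_contra hts
  exact ht (by rw [coordProj_mulVec_apply, if_neg hts])

lemma rank_coordProj (s : Finset α) : (coordProj s).rank = #s := by
  simp [coordProj, rank_diagonal]

/-- `X`, its transpose and `diagonal h` span a representation of `sl₂` on `α → ℝ` with `X` as
raising operator, in which the indicator functions of points are weight vectors. -/
structure IsRaisingOperator (X : Matrix α α ℝ) (h : α → ℝ) : Prop where
  shiftsBy : ShiftsBy h 2 X
  commutator : X * Xᵀ - Xᵀ * X = diagonal h

namespace IsRaisingOperator

variable {X : Matrix α α ℝ} {h : α → ℝ}

lemma transpose (hX : IsRaisingOperator X h) : IsRaisingOperator Xᵀ (-h) where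
  shiftsBy s t hst := by
    have := hX.shiftsBy t s hst
    simp only [Pi.neg_apply]
    linarith
  commutator := by
    rw [transpose_transpose, ← neg_sub, hX.commutator, diagonal_neg]; rfl

lemma gram_mul_pow (hX : IsRaisingOperator X h) (k : ℕ) :
    Xᵀ * X * X ^ k = X ^ k * (Xᵀ * X - diagonal fun t => k * (h t + k + 1)) := by
  induction k with
  | zero => simp
  | succ k ih =>
    have hcomm : X * Xᵀ - diagonal h = Xᵀ * X := by rw [← hX.commutator]; abel
    have hh : diagonal h * X = X * diagonal fun t => h t + 2 := hX.shiftsBy.diagonal_mul_comm id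
    have hk : (diagonal fun t => k * (h t + k + 1)) * X =
        X * diagonal fun t => k * (h t + 2 + k + 1) :=
      hX.shiftsBy.diagonal_mul_comm fun c => k * (c + k + 1)
    have hadd : (diagonal fun t => ((k + 1 : ℕ) : ℝ) * (h t + (k + 1 : ℕ) + 1)) =
        (diagonal fun t => h t + 2) + diagonal fun t => k * (h t + 2 + k + 1) := by
      rw [diagonal_add]
      congr 1 with t
      push_cast; ring
    calc Xᵀ * X * X ^ (k + 1)
        = X ^ k * (Xᵀ * X * X - (diagonal fun t => k * (h t + k + 1)) * X) := by
          rw [pow_succ, ← mul_assoc, ih, mul_assoc, sub_mul]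
      _ = X ^ k * (X * (Xᵀ * X) - X * (diagonal fun t => h t + 2) -
            X * diagonal fun t => k * (h t + 2 + k + 1)) := by
          rw [hk, ← hh, ← mul_assoc X, ← sub_mul, hcomm]
      _ = _ := by rw [hadd, pow_succ]; noncomm_ring

lemma eq_zero_of_pow_mulVec_eq_zero (hX : IsRaisingOperator X h) {m : ℕ} {v : α → ℝ}
    (hv : ∀ t, v t ≠ 0 → h t ≤ -m) (hXv : X ^ m *ᵥ v = 0) : v = 0 := by
  induction m generalizing v with
  | zero => simpa using hXv
  | succ m ih =>
    push_cast at hv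
    have hgram : (Xᵀ * X) *ᵥ v = (diagonal fun t => m * (h t + m + 1)) *ᵥ v := by
      rw [← sub_eq_zero, ← sub_mulVec]
      refine ih (fun t ht => ?_) ?_
      · by_contra hlt
        have hvt : v t = 0 := by_contra fun hvt => by linarith [hv t hvt]
        rw [sub_mulVec, Pi.sub_apply, mulVec_diagonal, hvt, mul_zero, sub_zero] at ht
        obtain ⟨s, hs, hst⟩ := (hX.shiftsBy.transpose.mul hX.shiftsBy).exists_of_mulVec_ne_zero ht
        linarith [hv s hs]
      · rw [mulVec_mulVec, ← hX.gram_mul_pow, mul_assoc, ← pow_succ', ← mulVec_mulVec, hXv,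
          mulVec_zero]
    have hX0 : X *ᵥ v = 0 := mulVec_eq_zero_of_gram_eq_diagonal hgram fun t ht =>
      mul_nonpos_of_nonneg_of_nonpos m.cast_nonneg (by linarith [hv t ht])
    have hcogram : (Xᵀᵀ * Xᵀ) *ᵥ v = diagonal h *ᵥ v := by
      rw [← hX.commutator, sub_mulVec, ← mulVec_mulVec v Xᵀ X, hX0, mulVec_zero, sub_zero,
        transpose_transpose]
    have hneg : ∀ t, v t ≠ 0 → h t < 0 := fun t ht => by
      linarith [hv t ht, (m.cast_nonneg : (0 : ℝ) ≤ m)]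
    have hXt0 : Xᵀ *ᵥ v = 0 :=
      mulVec_eq_zero_of_gram_eq_diagonal hcogram fun t ht => (hneg t ht).le
    refine eq_zero_of_diagonal_mulVec_eq_zero (c := h) ?_ fun t ht => (hneg t ht).ne
    rw [← hcogram, ← mulVec_mulVec, hXt0, mulVec_zero]

lemma card_level_le (hX : IsRaisingOperator X h) {m : ℕ} {c : ℝ} (hc : c ≤ -m) :
    #{t | h t = c} ≤ #{t | h t = c + m * 2} := by
  have hker : ∀ v, (X ^ m * coordProj {t | h t = c}) *ᵥ v = 0 →
      coordProj {t | h t = c} *ᵥ v = 0 := fun v hv =>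
    hX.eq_zero_of_pow_mulVec_eq_zero
      (fun t ht => (mem_filter.mp (mem_of_coordProj_mulVec_ne_zero ht)).2.trans_le hc)
      (by rwa [mulVec_mulVec])
  have hmaps : X ^ m * coordProj {t | h t = c} =
      coordProj {t | h t = c + m * 2} * (X ^ m * coordProj {t | h t = c}) := by
    ext s t
    simp only [coordProj_mul_apply, mul_coordProj_apply, mem_filter_univ]
    by_cases hst : (X ^ m) s t = 0
    · simp [hst]
    · grind [hX.shiftsBy.pow m s t hst]
  calc #{t | h t = c} = (coordProj {t | h t = c}).rank := (rank_coordProj _).symm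
    _ ≤ (X ^ m * coordProj {t | h t = c}).rank := rank_le_rank_of_ker_le hker
    _ ≤ (coordProj {t | h t = c + m * 2}).rank := by rw [hmaps]; exact rank_mul_le_left _ _
    _ = _ := rank_coordProj _

lemma eq_zero_of_pow_mulVec_add_eq_zero (hX : IsRaisingOperator X h) {m : ℕ} {u v : α → ℝ}
    (hu : ∀ t, u t ≠ 0 → h t ≤ -m) (hv : ∀ t, v t ≠ 0 → m < h t)
    (huv : X ^ m *ᵥ u + X ^ m *ᵥ ((X ^ m)ᵀ *ᵥ v) = 0) : u = 0 ∧ v = 0 := by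
  have horth : v ⬝ᵥ (X ^ m *ᵥ u) = 0 := sum_eq_zero fun t _ => by
    by_contra hne
    obtain ⟨s, hs, hst⟩ :=
      (hX.shiftsBy.pow m).exists_of_mulVec_ne_zero (right_ne_zero_of_mul hne)
    linarith [hu s hs, hv t (left_ne_zero_of_mul hne)]
  have hXv : (X ^ m)ᵀ *ᵥ v = 0 := by
    rw [← dotProduct_self_eq_zero, ← dotProduct_transpose_mul_self, transpose_transpose,
      ← mulVec_mulVec, eq_neg_of_add_eq_zero_right huv, dotProduct_neg, horth, neg_zero]
  constructor
  · refine hX.eq_zero_of_pow_mulVec_eq_zero (m := m) hu ?_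
    rwa [hXv, mulVec_zero, add_zero] at huv
  · refine hX.transpose.eq_zero_of_pow_mulVec_eq_zero (m := m)
      (fun t ht => neg_le_neg (hv t ht).le) ?_
    rwa [← transpose_pow]

lemma card_le_rank_pow (hX : IsRaisingOperator X h) (m : ℕ) :
    #{t | h t ≤ -m ∨ m < h t} ≤ (X ^ m).rank := by
  let low := coordProj ({t | h t ≤ -m} : Finset α)
  let high := coordProj ({t | (m : ℝ) < h t} : Finset α)
  have hker : ∀ v, (X ^ m * (low + (X ^ m)ᵀ * high)) *ᵥ v = 0 →
      coordProj {t | h t ≤ -m ∨ m < h t} *ᵥ v = 0 := by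
    intro v hv
    obtain ⟨hlow, hhigh⟩ := hX.eq_zero_of_pow_mulVec_add_eq_zero (u := low *ᵥ v) (v := high *ᵥ v)
      (fun t ht => (mem_filter.mp (mem_of_coordProj_mulVec_ne_zero ht)).2)
      (fun t ht => (mem_filter.mp (mem_of_coordProj_mulVec_ne_zero ht)).2)
      (by simpa only [mulVec_mulVec, mul_add, add_mulVec, mul_assoc] using hv)
    funext t
    have hl := congrFun hlow t
    have hh := congrFun hhigh t
    simp only [low, high, coordProj_mulVec_apply, mem_filter_univ, Pi.zero_apply] at hl hh ⊢
    grind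
  calc #{t | h t ≤ -m ∨ m < h t} = (coordProj {t | h t ≤ -m ∨ m < h t}).rank :=
        (rank_coordProj _).symm
    _ ≤ (X ^ m * (low + (X ^ m)ᵀ * high)).rank := rank_le_rank_of_ker_le hker
    _ ≤ (X ^ m).rank := rank_mul_le_left _ _

end IsRaisingOperator

lemma rank_mul_coordProj_le (M : Matrix α α ℝ) (s : Finset α) : (M * coordProj s).rank ≤ #s :=
  (rank_mul_le_right _ _).trans_eq (rank_coordProj s)

-- The minimal elements of `F` cost one power of `X`; what lies strictly above them costs the rest.
lemma card_add_rank_pow_mul_coordProj_le [PartialOrder α] {X : Matrix α α ℝ}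
    (hX : ∀ s t, X s t ≠ 0 → t < s) {m : ℕ} {F I : Finset α} (hFI : ∀ f ∈ F, ∀ x, f ≤ x → x ∈ I)
    (hF : ∀ C ⊆ F, IsChain (· ≤ ·) (C : Set α) → #C ≤ m) :
    #F + (X ^ m * coordProj I).rank ≤ #I := by
  classical
  induction m generalizing F I with
  | zero =>
    have hF0 : F = ∅ := eq_empty_of_forall_notMem fun f hf => by
      simpa using hF {f} (by simpa using hf) (by simp)
    simp [hF0, rank_coordProj]
  | succ m ih =>
    let I₁ : Finset α := {x | ∃ f ∈ F, f ≤ x}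
    let I₂ : Finset α := {x | ∃ f ∈ F, f < x}
    have hI₁ : I₁ ⊆ I := fun x hx => by
      obtain ⟨f, hf, hfx⟩ := (mem_filter.mp hx).2
      exact hFI f hf x hfx
    have hih : #(F ∩ I₂) + (X ^ m * coordProj I₂).rank ≤ #I₂ := by
      refine ih (fun f hf x hfx => ?_) fun C hC hchain =>
        card_chain_le_of_forall_exists_lt hF (hC.trans inter_subset_left)
          (fun x hx => (mem_filter.mp (mem_inter.mp (hC hx)).2).2) hchain
      obtain ⟨g, hg, hgf⟩ := (mem_filter.mp (mem_inter.mp hf).2).2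
      exact mem_filter.mpr ⟨mem_univ x, g, hg, hgf.trans_le hfx⟩
    have hcard : #I₁ + #(F ∩ I₂) = #F + #I₂ := by
      have hunion : I₁ = F ∪ I₂ := by
        ext x
        simp only [I₁, I₂, mem_filter_univ, mem_union, le_iff_eq_or_lt]
        grind
      rw [hunion, card_union_add_card_inter]
    have hshift : X * coordProj I₁ = coordProj I₂ * (X * coordProj I₁) := by
      ext s t
      simp only [coordProj_mul_apply, mul_coordProj_apply, I₁, I₂, mem_filter_univ]
      have hlt := hX s t
      by_cases ht : ∃ f ∈ F, f ≤ t
      · obtain ⟨f, hf, hft⟩ := ht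
        by_cases hst : X s t = 0
        · simp [hst]
        · have hs : ∃ f ∈ F, f < s := ⟨f, hf, hft.trans_lt (hlt hst)⟩
          rw [if_pos hs]
      · simp [ht]
    have hrank : (X ^ (m + 1) * coordProj I).rank ≤ #(I \ I₁) + (X ^ m * coordProj I₂).rank := by
      rw [← coordProj_sdiff_add hI₁, mul_add]
      refine (rank_add_le _ _).trans (add_le_add (rank_mul_coordProj_le _ _) ?_)
      rw [pow_succ, mul_assoc, hshift, ← mul_assoc]
      exact rank_mul_le_left _ _
    have hsdiff := card_sdiff_add_card_eq_card hI₁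
    lia

section Graded

variable {X : Matrix α α ℝ} {r : α → ℕ} {l : ℕ}

lemma card_rank_eq_le_of_add_le (hX : IsRaisingOperator X fun t => 2 * (r t : ℝ) - l) {i j : ℕ}
    (hij : i ≤ j) (hl : i + j ≤ l) : #{t | r t = i} ≤ #{t | r t = j} := by
  obtain ⟨m, rfl⟩ := Nat.exists_eq_add_of_le hij
  have hl : ((i + (i + m) : ℕ) : ℝ) ≤ l := by exact_mod_cast hl
  push_cast at hl
  have h := hX.card_level_le (m := m) (c := 2 * i - l) (by linarith)
  rwa [card_weight_eq rfl, card_weight_eq (k := i + m) (by push_cast; ring)] at h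

lemma card_rank_eq_le_of_le_add (hX : IsRaisingOperator X fun t => 2 * (r t : ℝ) - l) {i j : ℕ}
    (hij : i ≤ j) (hl : l ≤ i + j) : #{t | r t = j} ≤ #{t | r t = i} := by
  obtain ⟨m, rfl⟩ := Nat.exists_eq_add_of_le hij
  have hl : (l : ℝ) ≤ ((i + (i + m) : ℕ) : ℝ) := by exact_mod_cast hl
  push_cast at hl
  have h := hX.transpose.card_level_le (m := m) (c := l - 2 * (i + m)) (by linarith)
  simp only [Pi.neg_apply, neg_eq_iff_eq_neg] at h
  rwa [card_weight_eq (k := i + m) (by push_cast; ring), card_weight_eq (k := i) (by ring)] at h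

lemma card_middle_ranks_le (l m : ℕ) :
    #{i ∈ range (l + 1) | l < 2 * i + m ∧ 2 * i ≤ l + m} ≤ m := by
  calc _ ≤ #(Ioc ((l + m) / 2) ((l + m) / 2 + m)) := by
        refine card_le_card_of_injOn (· + m) (fun i hi => ?_) (add_left_injective m).injOn
        simp only [coe_filter, Set.mem_ofPred_eq, coe_Ioc, Set.mem_Ioc] at hi ⊢
        lia
    _ = m := by simp

theorem exists_card_iUnion_antichain_le [PartialOrder α]
    (hX : IsRaisingOperator X fun t => 2 * (r t : ℝ) - l) (hlt : ∀ s t, X s t ≠ 0 → t < s)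
    (hr : ∀ t, r t ≤ l) {m : ℕ} {A : Fin m → Set α} (hA : ∀ i, IsAntichain (· ≤ ·) (A i)) :
    ∃ S ⊆ range (l + 1), #S ≤ m ∧ Nat.card (⋃ i, A i) ≤ ∑ i ∈ S, #{t | r t = i} := by
  classical
  let S : Finset ℕ := {i ∈ range (l + 1) | l < 2 * i + m ∧ 2 * i ≤ l + m}
  let F : Finset α := {t | t ∈ ⋃ i, A i}
  refine ⟨S, filter_subset _ _, card_middle_ranks_le l m, ?_⟩
  have hchain : ∀ C ⊆ F, IsChain (· ≤ ·) (C : Set α) → #C ≤ m := fun C hCF hC => by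
    simpa using card_le_of_isChain_of_isAntichain hA hC fun x hx =>
      Set.mem_iUnion.mp (mem_filter.mp (hCF hx)).2
  have hrank := card_add_rank_pow_mul_coordProj_le hlt (I := univ) (by simp) hchain
  have hpow := (hX.card_le_rank_pow m)
  have hmul : X ^ m * coordProj univ = X ^ m := by simp [coordProj]
  have hlevels : ∑ i ∈ S, #{t | r t = i} =
      #{t | ¬(2 * (r t : ℝ) - l ≤ -m ∨ m < 2 * (r t : ℝ) - l)} := by
    rw [sum_card_fiberwise_eq_card_filter]
    congr 1 with t
    have hlow : 2 * (r t : ℝ) - l ≤ -m ↔ 2 * r t + m ≤ l := by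
      rw [← @Nat.cast_le ℝ]; push_cast; constructor <;> intro h <;> linarith
    have hhigh : (m : ℝ) < 2 * (r t : ℝ) - l ↔ l + m < 2 * r t := by
      rw [← @Nat.cast_lt ℝ]; push_cast; constructor <;> intro h <;> linarith
    have hrt := hr t
    simp only [S, mem_univ, mem_filter, mem_range, hlow, hhigh]
    lia
  have hcompl := card_filter_add_card_filter_not (s := univ)
    fun t => 2 * (r t : ℝ) - l ≤ -m ∨ m < 2 * (r t : ℝ) - l
  have hF : Nat.card (⋃ i, A i) = #F := by
    rw [Nat.card_eq_fintype_card, Fintype.card_subtype]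
  rw [hmul] at hrank
  lia

end Graded

/-! ### Weighted steps -/

section Diamond

lemma sum_ite_eq_of_injective {α M N : Type*} [Fintype α] [DecidableEq M] [AddCommMonoid N]
    {L : α → M} (hL : Function.Injective L) (c : M) (f : α → N) (a : N)
    (ha : ∀ r, L r = c → f r = a) (ha0 : c ∉ Set.range L → a = 0) :
    ∑ r, (if L r = c then f r else 0) = a := by
  classical
  by_cases hc : c ∈ Set.range L
  · obtain ⟨r, rfl⟩ := hc
    simp [hL.eq_iff, ha]
  · rw [ha0 hc]
    exact sum_eq_zero fun r _ => if_neg fun hr => hc ⟨r, hr⟩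

variable {α ι M : Type*} [AddCommGroup M]

/-- Nonnegative weights `w p` for the steps from `L t` to `L t + e p` inside the finite subset
`Set.range L` of `M`. Any two different steps out of a point, or into a point, span a parallelogram,
in which the products of the weights along the two steps out of the bottom and along the two steps
into the top agree; steps that leave the subset have weight zero. -/
structure IsDiamondWeighting (L : α → M) (e : ι → M) (w : ι → M → ℝ) : Prop where
  injective : Function.Injective L
  nonneg : ∀ p t, 0 ≤ w p (L t)
  parallelogram : ∀ p q, p ≠ q → ∀ c, c + e p ∈ Set.range L → c + e q ∈ Set.range L →
    c ∈ Set.range L ∧ c + e p + e q ∈ Set.range L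
  mul_eq_mul : ∀ p q, p ≠ q → ∀ c, w p c * w q c = w p (c + e q) * w q (c + e p)
  eq_zero_of_add_notMem : ∀ p t, L t + e p ∉ Set.range L → w p (L t) = 0
  eq_zero_of_sub_notMem : ∀ p t, L t - e p ∉ Set.range L → w p (L t - e p) = 0

variable [DecidableEq M]

/-- The matrix of the steps by `e` with weights `w`, scaled by square roots so that the transpose
carries the same weights. -/
def stepMatrix (L : α → M) (e : M) (w : M → ℝ) : Matrix α α ℝ :=
  of fun s t => if L s = L t + e then √(w (L t)) else 0

lemma exists_add_eq_of_sum_stepMatrix_ne_zero [Fintype ι] {L : α → M} {e : ι → M} {w : ι → M → ℝ}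
    {s t : α} (hst : (∑ p, stepMatrix L (e p) (w p)) s t ≠ 0) : ∃ p, L s = L t + e p := by
  rw [Matrix.sum_apply] at hst
  obtain ⟨p, -, hp⟩ := exists_ne_zero_of_sum_ne_zero hst
  exact ⟨p, by_contra fun hne => hp (if_neg hne)⟩

namespace IsDiamondWeighting

variable [Fintype α] {L : α → M} {e : ι → M} {w : ι → M → ℝ}

lemma stepMatrix_mul_transpose_of_ne (h : IsDiamondWeighting L e w) {p q : ι} (hpq : p ≠ q) :
    stepMatrix L (e p) (w p) * (stepMatrix L (e q) (w q))ᵀ =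
      (stepMatrix L (e q) (w q))ᵀ * stepMatrix L (e p) (w p) := by
  ext s t
  have hout (r : α) : stepMatrix L (e p) (w p) s r * (stepMatrix L (e q) (w q))ᵀ r t =
      if L r = L s - e p then
        (if L s - e p = L t - e q then √(w p (L r) * w q (L r)) else 0) else 0 := by
    simp only [stepMatrix, of_apply, transpose_apply, Real.sqrt_mul (h.nonneg p r)]
    grind
  have hin (r : α) : (stepMatrix L (e q) (w q))ᵀ s r * stepMatrix L (e p) (w p) r t =
      if L r = L s + e q then
        (if L s - e p = L t - e q then √(w p (L t) * w q (L s)) else 0) else 0 := by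
    simp only [stepMatrix, of_apply, transpose_apply, Real.sqrt_mul (h.nonneg p t)]
    grind
  simp only [mul_apply, hout, hin]
  by_cases hst : L s - e p = L t - e q
  · set c := L s - e p
    have hs : L s = c + e p := (sub_add_cancel _ _).symm
    have ht : L t = c + e q := by rw [hst, sub_add_cancel]
    obtain ⟨hbot, htop⟩ := h.parallelogram p q hpq c ⟨s, hs⟩ ⟨t, ht⟩
    rw [sum_ite_eq_of_injective h.injective c _ √(w p c * w q c)
        (fun r hr => by rw [if_pos hst, hr])
        fun hc => absurd hbot hc,
      sum_ite_eq_of_injective h.injective (L s + e q) _ √(w p c * w q c)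
        (fun r _ => by rw [if_pos hst, ht, hs, h.mul_eq_mul p q hpq c])
        fun hc => absurd (hs ▸ htop) hc]
  · simp [hst]

lemma stepMatrix_mul_transpose_self [DecidableEq α] (h : IsDiamondWeighting L e w) (p : ι) :
    stepMatrix L (e p) (w p) * (stepMatrix L (e p) (w p))ᵀ =
      diagonal fun t => w p (L t - e p) := by
  ext s t
  have hterm (r : α) : stepMatrix L (e p) (w p) s r * (stepMatrix L (e p) (w p))ᵀ r t =
      if L r = L s - e p then (if s = t then w p (L r) else 0) else 0 := by
    simp only [stepMatrix, of_apply, transpose_apply, eq_sub_iff_add_eq, eq_comm (a := L r + e p)]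
    by_cases hs : L s = L r + e p
    · simp only [← hs, h.injective.eq_iff, if_true, eq_comm (a := t)]
      split_ifs
      · exact Real.mul_self_sqrt (h.nonneg p r)
      · exact mul_zero _
    · simp [hs]
  simp only [mul_apply, hterm, diagonal_apply]
  refine sum_ite_eq_of_injective h.injective _ _ _ (fun r hr => by rw [hr]) fun hs => ?_
  rw [h.eq_zero_of_sub_notMem p s hs, ite_self]

lemma transpose_mul_stepMatrix_self [DecidableEq α] (h : IsDiamondWeighting L e w) (p : ι) :
    (stepMatrix L (e p) (w p))ᵀ * stepMatrix L (e p) (w p) = diagonal fun t => w p (L t) := by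
  ext s t
  have hterm (r : α) : (stepMatrix L (e p) (w p))ᵀ s r * stepMatrix L (e p) (w p) r t =
      if L r = L s + e p then (if s = t then w p (L s) else 0) else 0 := by
    simp only [stepMatrix, of_apply, transpose_apply]
    by_cases hr : L r = L s + e p
    · simp only [hr, add_left_inj, h.injective.eq_iff, if_true]
      split_ifs with hst
      · rw [← hst, Real.mul_self_sqrt (h.nonneg p s)]
      · exact mul_zero _
    · simp [hr]
  simp only [mul_apply, hterm, diagonal_apply]
  refine sum_ite_eq_of_injective h.injective _ _ _ (fun _ _ => rfl) fun hs => ?_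
  rw [h.eq_zero_of_add_notMem p s hs, ite_self]

variable [Fintype ι]

lemma commutator_sum_stepMatrix [DecidableEq α] (h : IsDiamondWeighting L e w) :
    (∑ p, stepMatrix L (e p) (w p)) * (∑ p, stepMatrix L (e p) (w p))ᵀ -
      (∑ p, stepMatrix L (e p) (w p))ᵀ * ∑ p, stepMatrix L (e p) (w p) =
        diagonal fun t => ∑ p, (w p (L t - e p) - w p (L t)) := by
  have hp (p : ι) : ∑ q, (stepMatrix L (e p) (w p) * (stepMatrix L (e q) (w q))ᵀ -
      (stepMatrix L (e q) (w q))ᵀ * stepMatrix L (e p) (w p)) =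
        diagonal fun t => w p (L t - e p) - w p (L t) := by
    rw [Fintype.sum_eq_single p fun q hq =>
      sub_eq_zero.mpr (h.stepMatrix_mul_transpose_of_ne hq.symm), h.stepMatrix_mul_transpose_self,
      h.transpose_mul_stepMatrix_self, diagonal_sub]
  rw [transpose_sum, sum_mul_sum, sum_mul_sum, sum_comm (f := fun q p => _ᵀ * _)]
  simp only [← sum_sub_distrib, hp]
  ext s t
  rw [Matrix.sum_apply]
  by_cases hst : s = t <;> simp [hst]

end IsDiamondWeighting

end Diamond

/-! ### An interpolation identity with repeated nodes -/

section Residue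

variable {F ι κ : Type*} [Field F] [DecidableEq ι]

open Polynomial in
lemma sum_prod_sub_div_prod_sub_of_injOn {s : Finset ι} {k : Finset κ} {v : ι → F} (w : κ → F)
    (hcard : #s = #k) (hv : Set.InjOn v s) :
    ∑ g ∈ s, (∏ q ∈ k, (v g - w q)) / ∏ g' ∈ s.erase g, (v g - v g') =
      ∑ g ∈ s, v g - ∑ q ∈ k, w q := by
  rcases s.eq_empty_or_nonempty with rfl | hs
  · simp [card_eq_zero.mp (hcard.symm.trans card_empty)]
  set Q : F[X] := ∏ q ∈ k, (X - C (w q))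
  set R : F[X] := ∏ g ∈ s, (X - C (v g))
  have hQ : Q.Monic := monic_prod_X_sub_C w k
  have hR : R.Monic := monic_prod_X_sub_C v s
  have hQdeg : Q.degree = #s := by
    rw [degree_eq_natDegree hQ.ne_zero, natDegree_finsetProd_X_sub_C_eq_card, hcard]
  have hRdeg : R.degree = #s := by
    rw [degree_eq_natDegree hR.ne_zero, natDegree_finsetProd_X_sub_C_eq_card]
  have hdeg : (Q - R).degree < #s :=
    hQdeg ▸ degree_sub_lt_left (hQdeg.trans hRdeg.symm) hQ.ne_zero (hQ.trans hR.symm)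
  have heval : ∀ g ∈ s, (Q - R).eval (v g) = ∏ q ∈ k, (v g - w q) := fun g hg => by
    have hzero : ∏ g' ∈ s, (v g - v g') = 0 := prod_eq_zero hg (sub_self _)
    simp [Q, R, eval_prod, hzero]
  calc
    _ = ∑ g ∈ s, (Q - R).eval (v g) / ∏ g' ∈ s.erase g, (v g - v g') :=
      sum_congr rfl fun g hg => by rw [heval g hg]
    _ = (Q - R).coeff (#s - 1) := (Lagrange.coeff_eq_sum hv hdeg).symm
    _ = _ := by
      have hQcoeff : Q.coeff (#s - 1) = -∑ q ∈ k, w q :=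
        hcard ▸ prod_X_sub_C_coeff_card_pred k w (hcard ▸ hs.card_pos)
      rw [coeff_sub, hQcoeff, prod_X_sub_C_coeff_card_pred s v hs.card_pos]
      ring

lemma sum_prod_sub_div_prod_sub_erase [DecidableEq κ] {s : Finset ι} {k : Finset κ} {v : ι → F}
    {w : κ → F} {g₀ : ι} {q₀ : κ} (hg₀ : g₀ ∈ s) (hq₀ : q₀ ∈ k) (h : w q₀ = v g₀)
    (hrep : ∀ g ∈ s.erase g₀, v g = v g₀ → ∃ q ∈ k.erase q₀, w q = v g₀) :
    ∑ g ∈ s, (∏ q ∈ k, (v g - w q)) / ∏ g' ∈ s.erase g, (v g - v g') =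
      ∑ g ∈ s.erase g₀, (∏ q ∈ k.erase q₀, (v g - w q)) /
        ∏ g' ∈ (s.erase g₀).erase g, (v g - v g') := by
  have hzero : ∀ g, v g = v g₀ → ∏ q ∈ k, (v g - w q) = 0 := fun g hg =>
    prod_eq_zero hq₀ (by rw [hg, h, sub_self])
  rw [← add_sum_erase s _ hg₀, hzero g₀ rfl, zero_div, zero_add]
  refine sum_congr rfl fun g hg => ?_
  by_cases hv : v g = v g₀
  · obtain ⟨q, hq, hw⟩ := hrep g hg hv
    rw [hzero g hv, zero_div, prod_eq_zero hq (by rw [hv, hw, sub_self]), zero_div]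
  · rw [← mul_prod_erase k _ hq₀, h,
      ← mul_prod_erase (s.erase g) _ (mem_erase.mpr ⟨(ne_of_mem_erase hg).symm, hg₀⟩),
      mul_div_mul_left _ _ (sub_ne_zero.mpr hv), erase_right_comm]

-- A repeated node contributes the junk value `0 / 0 = 0`.
lemma sum_prod_sub_div_prod_sub [DecidableEq F] {s : Finset ι} {k : Finset κ} {v : ι → F}
    {w : κ → F} (hcard : #s = #k)
    (hrep : ∀ x, 2 ≤ #{g ∈ s | v g = x} → #{g ∈ s | v g = x} ≤ #{q ∈ k | w q = x}) :
    ∑ g ∈ s, (∏ q ∈ k, (v g - w q)) / ∏ g' ∈ s.erase g, (v g - v g') =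
      ∑ g ∈ s, v g - ∑ q ∈ k, w q := by
  classical
  induction hn : #s generalizing s k with
  | zero =>
    exact sum_prod_sub_div_prod_sub_of_injOn w hcard (by simp [card_eq_zero.mp hn])
  | succ n ih =>
    by_cases hinj : Set.InjOn v s
    · exact sum_prod_sub_div_prod_sub_of_injOn w hcard hinj
    obtain ⟨g₀, hg₀, g₁, hg₁, hv, hne⟩ : ∃ g₀ ∈ s, ∃ g₁ ∈ s, v g₀ = v g₁ ∧ g₀ ≠ g₁ := by
      simpa [Set.InjOn] using hinj
    have htwo : 2 ≤ #{g ∈ s | v g = v g₀} :=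
      one_lt_card.mpr ⟨g₀, by simp [hg₀], g₁, by simp [hg₁, hv], hne⟩
    obtain ⟨q₀, hq₀, q₁, hq₁, hq⟩ := one_lt_card.mp (htwo.trans (hrep _ htwo))
    simp only [mem_filter] at hq₀ hq₁
    rw [sum_prod_sub_div_prod_sub_erase hg₀ hq₀.1 hq₀.2
        fun _ _ _ => ⟨q₁, mem_erase.mpr ⟨hq.symm, hq₁.1⟩, hq₁.2⟩,
      ih (by rw [card_erase_of_mem hg₀, card_erase_of_mem hq₀.1, hcard]) (fun x hx => ?_)
        (by rw [card_erase_of_mem hg₀, hn, Nat.add_sub_cancel]),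
      sum_erase_eq_sub hg₀, sum_erase_eq_sub hq₀.1, hq₀.2, sub_sub_sub_cancel_right]
    rw [filter_erase] at hx ⊢
    rw [filter_erase]
    have hlarge : 2 ≤ #{g ∈ s | v g = x} := hx.trans card_erase_le
    have hle := hrep x hlarge
    by_cases hxv : x = v g₀
    · subst hxv
      rw [card_erase_of_mem (by simp [hg₀]), card_erase_of_mem (by simp [hq₀])]
      omega
    · rw [erase_eq_of_notMem (by simp [Ne.symm hxv]),
        erase_eq_of_notMem (by simp [hq₀, Ne.symm hxv])]
      exact hle

end Residue

/-! ### Labellings of colored posets -/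

/-- A set of positions `P`, each with a color, which is a node of a diagram, and an integral
rank. -/
structure ColoredPoset (K P : Type*) where
  diagram : SimpleGraph K
  color : P → K
  rank : P → ℤ

namespace ColoredPoset

variable {K P : Type*} (D : ColoredPoset K P)

/-- The covering relation of the partial order on positions: the colors are adjacent and the rank
goes up by one. -/
def Covers (p q : P) : Prop :=
  D.diagram.Adj (D.color p) (D.color q) ∧ D.rank q = D.rank p + 1

/-- Two positions whose colors are equal or adjacent. -/
def Linked (p q : P) : Prop :=
  D.color p = D.color q ∨ D.diagram.Adj (D.color p) (D.color q)

/-- The order-reversing integral labellings of the positions. -/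
def IsLabelling (c : P → ℤ) : Prop :=
  ∀ p q, D.Covers p q → c q ≤ c p

variable {D}

lemma IsLabelling.inf {c d : P → ℤ} (hc : D.IsLabelling c) (hd : D.IsLabelling d) :
    D.IsLabelling (c ⊓ d) :=
  fun p q h => inf_le_inf (hc p q h) (hd p q h)

lemma IsLabelling.sup {c d : P → ℤ} (hc : D.IsLabelling c) (hd : D.IsLabelling d) :
    D.IsLabelling (c ⊔ d) :=
  fun p q h => sup_le_sup (hc p q h) (hd p q h)

lemma IsLabelling.le_of_forall_exists_covers {c : P → ℤ} (hc : D.IsLabelling c) {S : Finset P}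
    {q : P} (hS : ∀ p ∈ S, p ≠ q → ∃ p' ∈ S, D.Covers p p') : ∀ p ∈ S, c q ≤ c p := by
  by_contra! hne
  obtain ⟨p, hp, hmax⟩ := exists_max_image {p ∈ S | c p < c q} D.rank
    (hne.imp fun p hp => mem_filter.mpr hp)
  simp only [mem_filter] at hp hmax
  obtain ⟨p', hp', hcov⟩ := hS p hp.1 fun h => hp.2.ne (congrArg c h)
  have := hmax p' ⟨hp', (hc p p' hcov).trans_lt hp.2⟩
  have := hcov.2
  omega

lemma IsLabelling.le_of_forall_exists_covered {c : P → ℤ} (hc : D.IsLabelling c) {S : Finset P}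
    {q : P} (hS : ∀ p ∈ S, p ≠ q → ∃ p' ∈ S, D.Covers p' p) : ∀ p ∈ S, c p ≤ c q := by
  by_contra! hne
  obtain ⟨p, hp, hmin⟩ := exists_min_image {p ∈ S | c q < c p} D.rank
    (hne.imp fun p hp => mem_filter.mpr hp)
  simp only [mem_filter] at hp hmin
  obtain ⟨p', hp', hcov⟩ := hS p hp.1 fun h => hp.2.ne' (congrArg c h)
  have := hmin p' ⟨hp', hp.2.trans_le (hc p' p hcov)⟩
  have := hcov.2
  omega

variable (D)

/-- The shift under which the labels of the positions become the nodes and zeros of a rational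
function; see `sum_edgeWeight_sub`. -/
def shiftedLabel (c : P → ℤ) (p : P) : ℝ := c p - D.rank p / 2

section Single

variable [DecidableEq P] (c : P → ℤ)

lemma add_single_inf_add_single {p q : P} (hpq : p ≠ q) :
    (c + Pi.single p 1) ⊓ (c + Pi.single q 1) = c := by
  ext r
  simp only [Pi.inf_apply, Pi.add_apply, Pi.single_apply]
  grind

lemma add_single_sup_add_single {p q : P} (hpq : p ≠ q) :
    (c + Pi.single p 1) ⊔ (c + Pi.single q 1) = c + Pi.single p 1 + Pi.single q 1 := by
  ext r
  simp only [Pi.sup_apply, Pi.add_apply, Pi.single_apply]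
  grind

lemma shiftedLabel_add_single (p : P) :
    D.shiftedLabel (c + Pi.single p 1) p = D.shiftedLabel c p + 1 := by
  simp [shiftedLabel]; ring

lemma shiftedLabel_sub_single (p : P) :
    D.shiftedLabel (c - Pi.single p 1) p = D.shiftedLabel c p - 1 := by
  simp [shiftedLabel]; ring

/-- The nodes of the interpolation formula for one color: the shifted label of each position of
this color, before and after lowering it by one. -/
def node (c : P → ℤ) (g : P × Bool) : ℝ :=
  if g.2 then D.shiftedLabel c g.1 else D.shiftedLabel c g.1 - 1

lemma prod_erase_sub_node (c : P → ℤ) {S : Finset P} {p : P} (hp : p ∈ S) (b : Bool) (y : ℝ) :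
    ∏ g ∈ (S ×ˢ univ).erase (p, b), (y - D.node c g) = (y - D.node c (p, !b)) *
      ∏ q ∈ S.erase p, (y - D.shiftedLabel c q) * (y - (D.shiftedLabel c q - 1)) := by
  have hset : (S ×ˢ univ).erase (p, b) = insert (p, !b) (S.erase p ×ˢ univ) := by
    ext ⟨q, b'⟩
    by_cases hq : q = p <;> cases b <;> cases b' <;> simp [hq, hp]
  rw [hset, prod_insert (by simp), prod_product]
  simp [node]

variable {p q : P} (h : q ≠ p)
include h

lemma shiftedLabel_add_single_of_ne :
    D.shiftedLabel (c + Pi.single p 1) q = D.shiftedLabel c q := by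
  simp [shiftedLabel, h]

lemma shiftedLabel_sub_single_of_ne :
    D.shiftedLabel (c - Pi.single p 1) q = D.shiftedLabel c q := by
  simp [shiftedLabel, h]

end Single

variable [DecidableEq K] [DecidableRel D.diagram.Adj]

/-- The Cartan matrix of the simply laced diagram. -/
def cartan (i j : K) : ℤ := if i = j then 2 else if D.diagram.Adj i j then -1 else 0

/-- The contribution of the position `q` to the weight of a step at `p`, as a function of the
difference of their shifted labels. -/
def factor (p q : P) (d : ℝ) : ℝ :=
  if D.color p = D.color q then (d * (d + 1))⁻¹
  else if D.diagram.Adj (D.color p) (D.color q) then d + 1 / 2 else 1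

lemma factor_mul_factor_neg (p q : P) (d : ℝ) :
    D.factor p q d * D.factor q p (-d) = D.factor p q (d - 1) * D.factor q p (-d - 1) := by
  simp only [factor, eq_comm (a := D.color q), D.diagram.adj_comm (D.color q)]
  split_ifs
  · rw [← mul_inv, ← mul_inv]
    ring_nf
  · ring
  · rfl

variable [Fintype P]

/-- The positions of color `i`. -/
def positions (i : K) : Finset P := {p | D.color p = i}

/-- The positions whose color is adjacent to `i`. -/
def adjPositions (i : K) : Finset P := {p | D.diagram.Adj i (D.color p)}

omit [DecidableRel D.diagram.Adj] in
variable {D} in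
@[simp]
lemma mem_positions {i : K} {p : P} : p ∈ D.positions i ↔ D.color p = i := by simp [positions]

omit [DecidableEq K] in
variable {D} in
@[simp]
lemma mem_adjPositions {i : K} {p : P} :
    p ∈ D.adjPositions i ↔ D.diagram.Adj i (D.color p) := by
  simp [adjPositions]

/-- Combinatorial conditions satisfied by the minuscule posets and inherited by suitable pieces of
them. The conditions on the number and the arrangement of the neighbors of a position are only
imposed for the colors in `J`. -/
structure IsMinusculeOn (J : Finset K) : Prop where
  eq_of_rank_eq : ∀ p q, D.color p = D.color q → D.rank p = D.rank q → p = q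
  even_rank_sub : ∀ p q, D.color p = D.color q → Even (D.rank p - D.rank q)
  odd_rank_sub : ∀ p q, D.diagram.Adj (D.color p) (D.color q) → Odd (D.rank p - D.rank q)
  exists_between : ∀ p q, D.Linked p q → D.rank p + 2 ≤ D.rank q →
    ∃ r, D.Linked p r ∧ D.Linked r q ∧ D.rank p < D.rank r ∧ D.rank r < D.rank q
  two_between : ∀ p q, D.color p ∈ J → D.color p = D.color q → D.rank q = D.rank p + 2 →
    ∃ r s, r ≠ s ∧ (D.Covers p r ∧ D.Covers r q) ∧ D.Covers p s ∧ D.Covers s q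
  odd_card_lower : ∀ p, D.color p ∈ J →
    Odd #{q | D.diagram.Adj (D.color p) (D.color q) ∧ D.rank q < D.rank p}
  card_adjPositions : ∀ i ∈ J, #(D.adjPositions i) = 2 * #(D.positions i)

variable {D}

namespace IsMinusculeOn

variable {J : Finset K} (hD : D.IsMinusculeOn J) {c : P → ℤ} (hc : D.IsLabelling c)
include hD hc

lemma le_of_linked {p q : P} (hpq : D.Linked p q) (hlt : D.rank p < D.rank q) : c q ≤ c p := by
  induction hn : (D.rank q - D.rank p).toNat using Nat.strong_induction_on generalizing p q with
  | _ n ih =>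
    by_cases hgap : D.rank p + 2 ≤ D.rank q
    · obtain ⟨r, hpr, hrq, hp, hq⟩ := hD.exists_between p q hpq hgap
      exact (ih _ (by omega) hrq hq rfl).trans (ih _ (by omega) hpr hp rfl)
    have hone : D.rank q = D.rank p + 1 := by omega
    rcases hpq with hcol | hadj
    · obtain ⟨m, hm⟩ := hD.even_rank_sub p q hcol
      omega
    · exact hc p q ⟨hadj, hone⟩

lemma half_le_shiftedLabel_sub {p q : P} (hadj : D.diagram.Adj (D.color p) (D.color q))
    (hlt : D.rank p < D.rank q) : 1 / 2 ≤ D.shiftedLabel c p - D.shiftedLabel c q := by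
  have hle : (c q : ℝ) ≤ c p := mod_cast hD.le_of_linked hc (.inr hadj) hlt
  have hrank : (D.rank p : ℝ) + 1 ≤ D.rank q := mod_cast hlt
  simp only [shiftedLabel]
  linarith

lemma one_le_shiftedLabel_sub {p q : P} (hcol : D.color p = D.color q)
    (hlt : D.rank p < D.rank q) : 1 ≤ D.shiftedLabel c p - D.shiftedLabel c q := by
  have hle : (c q : ℝ) ≤ c p := mod_cast hD.le_of_linked hc (.inl hcol) hlt
  have hgap : D.rank p + 2 ≤ D.rank q := by
    obtain ⟨m, hm⟩ := hD.even_rank_sub p q hcol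
    omega
  have hrank : (D.rank p : ℝ) + 2 ≤ D.rank q := mod_cast hgap
  simp only [shiftedLabel]
  linarith

lemma shiftedLabel_injective {p q : P} (hcol : D.color p = D.color q)
    (h : D.shiftedLabel c p = D.shiftedLabel c q) : p = q := by
  refine hD.eq_of_rank_eq p q hcol (le_antisymm ?_ ?_) <;> by_contra! hlt
  · linarith [hD.one_le_shiftedLabel_sub hc hcol.symm hlt]
  · linarith [hD.one_le_shiftedLabel_sub hc hcol hlt]

lemma factor_nonneg_of_color_eq {p q : P} (hcol : D.color p = D.color q) :
    0 ≤ D.factor p q (D.shiftedLabel c p - D.shiftedLabel c q) := by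
  rw [factor, if_pos hcol, inv_nonneg]
  rcases lt_trichotomy (D.rank p) (D.rank q) with hlt | heq | hlt
  · have := hD.one_le_shiftedLabel_sub hc hcol hlt
    positivity
  · simp [hD.eq_of_rank_eq p q hcol heq]
  · nlinarith [hD.one_le_shiftedLabel_sub hc hcol.symm hlt]

lemma ite_mul_factor_nonneg (p q : P) :
    0 ≤ (if D.diagram.Adj (D.color p) (D.color q) ∧ D.rank q < D.rank p then -1 else 1) *
      D.factor p q (D.shiftedLabel c p - D.shiftedLabel c q) := by
  by_cases hcol : D.color p = D.color q
  · rw [if_neg fun h => h.1.ne hcol, one_mul]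
    exact hD.factor_nonneg_of_color_eq hc hcol
  by_cases hadj : D.diagram.Adj (D.color p) (D.color q)
  · rw [factor, if_neg hcol, if_pos hadj]
    rcases lt_or_ge (D.rank q) (D.rank p) with hlt | hge
    · rw [if_pos ⟨hadj, hlt⟩]
      linarith [hD.half_le_shiftedLabel_sub hc hadj.symm hlt]
    · have hlt : D.rank p < D.rank q := hge.lt_of_ne fun heq => by
        simpa [heq] using hD.odd_rank_sub p q hadj
      rw [if_neg fun h => h.2.not_gt hlt]
      linarith [hD.half_le_shiftedLabel_sub hc hadj hlt]
  · simp [factor, hcol, hadj]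

lemma card_filter_node_le_two (i : K) (x : ℝ) :
    #{g ∈ D.positions i ×ˢ univ | D.node c g = x} ≤ 2 := by
  refine card_le_card_of_injOn Prod.snd (fun g _ => mem_univ g.2) ?_
  rintro ⟨p, b⟩ hp ⟨q, b'⟩ hq rfl
  simp only [mem_coe, mem_filter, mem_product, mem_positions, mem_univ, and_true] at hp hq
  have hz : D.shiftedLabel c p = D.shiftedLabel c q := by
    have := hp.2.trans hq.2.symm
    cases b <;> simpa [node] using this
  rw [hD.shiftedLabel_injective hc (hp.1.trans hq.1.symm) hz]

lemma two_le_card_filter_adjPositions {p p' : P} (hp : D.color p ∈ J)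
    (hcol : D.color p = D.color p') (hz : D.shiftedLabel c p - 1 = D.shiftedLabel c p') :
    2 ≤ #{q ∈ D.adjPositions (D.color p) | D.shiftedLabel c q - 1 / 2 = D.shiftedLabel c p'} := by
  have hlt : D.rank p < D.rank p' := by
    by_contra! hge
    rcases hge.lt_or_eq with hlt | heq
    · linarith [hD.one_le_shiftedLabel_sub hc hcol.symm hlt]
    · rw [hD.eq_of_rank_eq p p' hcol heq.symm] at hz
      linarith
  have hz' : 2 * (c p - c p') + (D.rank p' - D.rank p) = 2 := by
    simp only [shiftedLabel] at hz
    exact_mod_cast (by push_cast; linarith :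
      ((2 * (c p - c p') + (D.rank p' - D.rank p) : ℤ) : ℝ) = 2)
  obtain ⟨hrank, hc'⟩ : D.rank p' = D.rank p + 2 ∧ c p = c p' := by
    have := hD.le_of_linked hc (.inl hcol) hlt
    omega
  have hmem {r : P} (hpr : D.Covers p r) (hrp' : D.Covers r p') :
      r ∈ {q ∈ D.adjPositions (D.color p) |
        D.shiftedLabel c q - 1 / 2 = D.shiftedLabel c p'} := by
    have hcr : c r = c p' := le_antisymm (hc' ▸ hc p r hpr) (hc r p' hrp')
    simp only [mem_filter, mem_adjPositions, shiftedLabel, hcr, hrp'.2]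
    refine ⟨hpr.1, ?_⟩
    push_cast
    ring
  obtain ⟨r, s, hne, hr, hs⟩ := hD.two_between p p' hp hcol hrank
  exact one_lt_card.mpr ⟨r, hmem hr.1 hr.2, s, hmem hs.1 hs.2, hne⟩

lemma card_filter_node_le {i : K} (hi : i ∈ J) {x : ℝ}
    (h : 2 ≤ #{g ∈ D.positions i ×ˢ univ | D.node c g = x}) :
    #{g ∈ D.positions i ×ˢ univ | D.node c g = x} ≤
      #{q ∈ D.adjPositions i | D.shiftedLabel c q - 1 / 2 = x} := by
  refine (hD.card_filter_node_le_two hc i x).trans ?_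
  obtain ⟨⟨p, b⟩, hg, ⟨p', b'⟩, hg', hne⟩ := one_lt_card.mp h
  simp only [mem_filter, mem_product, mem_positions, mem_univ, and_true] at hg hg'
  obtain ⟨rfl, hx⟩ := hg
  obtain ⟨hcol, hx'⟩ := hg'
  simp only [node] at hx hx'
  cases b <;> cases b' <;> simp only [if_true, Bool.false_eq_true, if_false] at hx hx'
  · have hpp' := hD.shiftedLabel_injective hc hcol.symm (by linarith)
    exact absurd (congrArg (·, false) hpp') hne
  · exact hx' ▸ hD.two_le_card_filter_adjPositions hc hi hcol.symm (hx.trans hx'.symm)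
  · rw [← hcol]
    exact hx ▸ hD.two_le_card_filter_adjPositions hc (hcol ▸ hi) hcol (hx'.trans hx.symm)
  · have hpp' := hD.shiftedLabel_injective hc hcol.symm (hx.trans hx'.symm)
    exact absurd (congrArg (·, true) hpp') hne

end IsMinusculeOn

variable (D)

variable [DecidableEq P]

/-- The weight of the step which raises the label of `p` by one, modelled on the matrix
coefficients in a Gelfand–Tsetlin basis. -/
def edgeWeight (c : P → ℤ) (p : P) : ℝ :=
  -∏ q ∈ univ.erase p, D.factor p q (D.shiftedLabel c p - D.shiftedLabel c q)

lemma edgeWeight_mul_edgeWeight (c : P → ℤ) {p q : P} (h : p ≠ q) :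
    D.edgeWeight c p * D.edgeWeight c q =
      D.edgeWeight (c + Pi.single q 1) p * D.edgeWeight (c + Pi.single p 1) q := by
  have hq : q ∈ univ.erase p := by simp [h.symm]
  have hp : p ∈ univ.erase q := by simp [h]
  have hrest (p q : P) : ∏ x ∈ (univ.erase p).erase q,
      D.factor p x (D.shiftedLabel c p - D.shiftedLabel (c + Pi.single q 1) x) =
        ∏ x ∈ (univ.erase p).erase q,
          D.factor p x (D.shiftedLabel c p - D.shiftedLabel c x) :=
    prod_congr rfl fun x hx => by rw [D.shiftedLabel_add_single_of_ne c (ne_of_mem_erase hx)]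
  have hpair := D.factor_mul_factor_neg p q (D.shiftedLabel c p - D.shiftedLabel c q)
  rw [neg_sub, sub_sub, sub_sub] at hpair
  simp only [edgeWeight, ← mul_prod_erase _ _ hq, ← mul_prod_erase _ _ hp,
    D.shiftedLabel_add_single, D.shiftedLabel_add_single_of_ne c h,
    D.shiftedLabel_add_single_of_ne c h.symm, hrest]
  linear_combination (∏ x ∈ (univ.erase p).erase q,
      D.factor p x (D.shiftedLabel c p - D.shiftedLabel c x)) *
    (∏ x ∈ (univ.erase q).erase p, D.factor q x (D.shiftedLabel c q - D.shiftedLabel c x)) * hpair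

variable {D}

lemma edgeWeight_eq_zero {c : P → ℤ} {p q : P} (hadj : D.diagram.Adj (D.color p) (D.color q))
    (h : D.shiftedLabel c p - D.shiftedLabel c q = -1 / 2) : D.edgeWeight c p = 0 := by
  have hq : q ∈ univ.erase p :=
    mem_erase.mpr ⟨fun hqp => hadj.ne (congrArg D.color hqp.symm), mem_univ q⟩
  rw [edgeWeight, prod_eq_zero hq (by rw [factor, if_neg hadj.ne, if_pos hadj, h]; norm_num),
    neg_zero]

lemma IsLabelling.edgeWeight_eq_zero_of_add {c : P → ℤ} (hc : D.IsLabelling c) {p : P}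
    (h : ¬D.IsLabelling (c + Pi.single p 1)) : D.edgeWeight c p = 0 := by
  simp only [IsLabelling, not_forall, not_le, Pi.add_apply, Pi.single_apply] at h
  obtain ⟨q, r, hqr, hlt⟩ := h
  have hle := hc q r hqr
  obtain rfl : r = p := by grind
  have heq : c q = c r := by grind
  refine edgeWeight_eq_zero hqr.1.symm ?_
  simp only [shiftedLabel, heq, hqr.2]
  push_cast
  ring

lemma IsLabelling.edgeWeight_eq_zero_of_sub {c : P → ℤ} (hc : D.IsLabelling c) {p : P}
    (h : ¬D.IsLabelling (c - Pi.single p 1)) : D.edgeWeight (c - Pi.single p 1) p = 0 := by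
  simp only [IsLabelling, not_forall, not_le, Pi.sub_apply, Pi.single_apply] at h
  obtain ⟨q, r, hqr, hlt⟩ := h
  have hle := hc q r hqr
  obtain rfl : q = p := by grind
  have hne : r ≠ q := fun hrq => hqr.1.ne (congrArg D.color hrq.symm)
  have heq : c r = c q := by grind
  refine edgeWeight_eq_zero hqr.1 ?_
  rw [shiftedLabel_sub_single, shiftedLabel_sub_single_of_ne _ _ hne]
  simp only [shiftedLabel, heq, hqr.2]
  push_cast
  ring

namespace IsMinusculeOn

variable {J : Finset K} (hD : D.IsMinusculeOn J) {c : P → ℤ} (hc : D.IsLabelling c)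
include hD hc

lemma edgeWeight_nonneg {p : P} (hp : D.color p ∈ J) : 0 ≤ D.edgeWeight c p := by
  have hsign : ∏ q ∈ univ.erase p, (if D.diagram.Adj (D.color p) (D.color q) ∧
      D.rank q < D.rank p then (-1 : ℝ) else 1) = -1 := by
    rw [← prod_filter, prod_const, filter_erase, erase_eq_of_notMem (by simp)]
    exact (hD.odd_card_lower p hp).neg_one_pow
  rw [edgeWeight, ← neg_one_mul, ← hsign, ← prod_mul_distrib]
  exact prod_nonneg fun q _ => hD.ite_mul_factor_nonneg hc p q

end IsMinusculeOn

variable (D)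

lemma edgeWeight_eq_div (c : P → ℤ) {i : K} {p : P} (hp : p ∈ D.positions i) :
    D.edgeWeight c p =
      -((∏ q ∈ D.adjPositions i, (D.shiftedLabel c p - (D.shiftedLabel c q - 1 / 2))) /
        ∏ q ∈ (D.positions i).erase p, (D.shiftedLabel c p - D.shiftedLabel c q) *
          (D.shiftedLabel c p - (D.shiftedLabel c q - 1))) := by
  obtain rfl : D.color p = i := mem_positions.mp hp
  have hfactor (q : P) (d : ℝ) : D.factor p q d =
      (if D.diagram.Adj (D.color p) (D.color q) then d + 1 / 2 else 1) *
        if D.color q = D.color p then (d * (d + 1))⁻¹ else 1 := by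
    simp only [factor, eq_comm (a := D.color p)]
    split_ifs with hcol hadj
    · exact absurd hcol hadj.ne'
    all_goals simp
  rw [edgeWeight, positions, adjPositions, div_eq_mul_inv, ← prod_inv_distrib]
  simp only [hfactor, prod_mul_distrib, ← prod_filter, filter_erase]
  rw [erase_eq_of_notMem (by simp)]
  simp only [sub_sub_eq_add_sub, sub_add_eq_add_sub]

lemma edgeWeight_sub_single_eq_div (c : P → ℤ) {i : K} {p : P} (hp : p ∈ D.positions i) :
    D.edgeWeight (c - Pi.single p 1) p =
      -((∏ q ∈ D.adjPositions i, (D.shiftedLabel c p - 1 - (D.shiftedLabel c q - 1 / 2))) /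
        ∏ q ∈ (D.positions i).erase p, (D.shiftedLabel c p - 1 - D.shiftedLabel c q) *
          (D.shiftedLabel c p - 1 - (D.shiftedLabel c q - 1))) := by
  rw [D.edgeWeight_eq_div _ hp, shiftedLabel_sub_single]
  congr 2
  · refine prod_congr rfl fun q hq => ?_
    rw [shiftedLabel_sub_single_of_ne]
    rintro rfl
    simp_all
  · exact prod_congr rfl fun q hq => by rw [D.shiftedLabel_sub_single_of_ne c (ne_of_mem_erase hq)]

lemma edgeWeight_sub_single_sub_edgeWeight (c : P → ℤ) {i : K} {p : P} (hp : p ∈ D.positions i) :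
    D.edgeWeight (c - Pi.single p 1) p - D.edgeWeight c p =
      ∑ b : Bool, (∏ q ∈ D.adjPositions i, (D.node c (p, b) - (D.shiftedLabel c q - 1 / 2))) /
        ∏ g ∈ (D.positions i ×ˢ univ).erase (p, b), (D.node c (p, b) - D.node c g) := by
  rw [D.edgeWeight_eq_div c hp, D.edgeWeight_sub_single_eq_div c hp]
  simp only [D.prod_erase_sub_node c hp, Fintype.sum_bool]
  simp only [node, Bool.not_true, Bool.not_false, Bool.false_eq_true, if_true, if_false,
    sub_sub_cancel, sub_sub_cancel_left, one_mul, neg_one_mul, div_neg]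
  ring

variable {D}

namespace IsMinusculeOn

variable {J : Finset K} (hD : D.IsMinusculeOn J) {c : P → ℤ} (hc : D.IsLabelling c)
include hD hc

lemma sum_edgeWeight_sub {i : K} (hi : i ∈ J) :
    ∑ p ∈ D.positions i, (D.edgeWeight (c - Pi.single p 1) p - D.edgeWeight c p) =
      2 * ∑ p ∈ D.positions i, D.shiftedLabel c p -
        ∑ q ∈ D.adjPositions i, D.shiftedLabel c q := by
  have hcard : #(D.positions i ×ˢ (univ : Finset Bool)) = #(D.adjPositions i) := by
    rw [card_product, card_univ, Fintype.card_bool, hD.card_adjPositions i hi, mul_comm]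
  have hcard' : (#(D.adjPositions i) : ℝ) = 2 * #(D.positions i) := mod_cast
    hD.card_adjPositions i hi
  rw [sum_congr rfl fun p hp => D.edgeWeight_sub_single_sub_edgeWeight c hp, ← sum_product',
    sum_prod_sub_div_prod_sub hcard fun x hx => hD.card_filter_node_le hc hi hx, sum_product]
  simp only [Fintype.sum_bool, node, if_true, Bool.false_eq_true, if_false, sum_add_distrib,
    sum_sub_distrib, sum_const, nsmul_eq_mul, hcard']
  ring

lemma sum_mul_edgeWeight_sub [Fintype K] {κ : K → ℝ} (hκ : ∀ i ∉ J, κ i = 0) :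
    ∑ p, κ (D.color p) * (D.edgeWeight (c - Pi.single p 1) p - D.edgeWeight c p) =
      ∑ q, (∑ i, κ i * D.cartan i (D.color q)) * D.shiftedLabel c q := by
  have hcolor (i : K) : ∑ p ∈ D.positions i,
      κ i * (D.edgeWeight (c - Pi.single p 1) p - D.edgeWeight c p) =
        ∑ q, κ i * D.cartan i (D.color q) * D.shiftedLabel c q := by
    by_cases hi : i ∈ J
    · rw [← mul_sum, hD.sum_edgeWeight_sub hc hi]
      simp only [mul_assoc, ← mul_sum, positions, adjPositions, sum_filter]
      rw [mul_sum, ← sum_sub_distrib]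
      congr 1
      refine sum_congr rfl fun q _ => ?_
      by_cases hq : D.color q = i
      · simp [cartan, hq]
      · by_cases hadj : D.diagram.Adj i (D.color q) <;> simp [cartan, hq, Ne.symm hq, hadj]
    · simp [hκ i hi]
  simp only [sum_mul]
  rw [sum_comm, ← sum_fiberwise univ D.color]
  refine sum_congr rfl fun i _ => ?_
  rw [← hcolor]
  exact sum_congr rfl fun p hp => by rw [mem_positions.mp hp]

end IsMinusculeOn

section Steps

variable {α : Type*} {L : α → P → ℤ} {J : Finset K} {f : P → ℤ} {κ : K → ℝ}

omit [DecidableEq K] [DecidableRel D.diagram.Adj] [Fintype P] in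
lemma add_single_mem_range
    (hrange : ∀ c, c ∈ Set.range L ↔ D.IsLabelling c ∧ ∀ p, D.color p ∉ J → c p = f p)
    (t : α) {p : P} (hp : D.color p ∈ J) {z : ℤ} (h : D.IsLabelling (L t + Pi.single p z)) :
    L t + Pi.single p z ∈ Set.range L := by
  refine (hrange _).mpr ⟨h, fun q hq => ?_⟩
  have hne : q ≠ p := fun hqp => hq (hqp ▸ hp)
  simp [hne, ((hrange _).mp ⟨t, rfl⟩).2 q hq]

lemma IsMinusculeOn.isDiamondWeighting (hD : D.IsMinusculeOn J) (hL : Function.Injective L)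
    (hrange : ∀ c, c ∈ Set.range L ↔ D.IsLabelling c ∧ ∀ p, D.color p ∉ J → c p = f p)
    (hκ₀ : ∀ i, 0 ≤ κ i) (hκ : ∀ i ∉ J, κ i = 0) :
    IsDiamondWeighting L (fun p => Pi.single p 1)
      fun p c => κ (D.color p) * D.edgeWeight c p where
  injective := hL
  nonneg p t := by
    by_cases hp : D.color p ∈ J
    · exact mul_nonneg (hκ₀ _) (hD.edgeWeight_nonneg ((hrange _).mp ⟨t, rfl⟩).1 hp)
    · simp [hκ _ hp]
  parallelogram p q hpq c hp hq := by
    obtain ⟨hcp, hfp⟩ := (hrange _).mp hp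
    obtain ⟨hcq, hfq⟩ := (hrange _).mp hq
    have hinf := (hrange _).mpr ⟨hcp.inf hcq, fun r hr => by simp only [Pi.inf_apply, hfp r hr,
      hfq r hr, inf_idem]⟩
    have hsup := (hrange _).mpr ⟨hcp.sup hcq, fun r hr => by simp only [Pi.sup_apply, hfp r hr,
      hfq r hr, sup_idem]⟩
    rw [add_single_inf_add_single c hpq] at hinf
    rw [add_single_sup_add_single c hpq] at hsup
    exact ⟨hinf, hsup⟩
  mul_eq_mul p q hpq c := by
    linear_combination κ (D.color p) * κ (D.color q) * D.edgeWeight_mul_edgeWeight c hpq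
  eq_zero_of_add_notMem p t h := by
    by_cases hp : D.color p ∈ J
    · rw [((hrange _).mp ⟨t, rfl⟩).1.edgeWeight_eq_zero_of_add
        fun hlab => h (add_single_mem_range hrange t hp hlab), mul_zero]
    · simp [hκ _ hp]
  eq_zero_of_sub_notMem p t h := by
    by_cases hp : D.color p ∈ J
    · rw [((hrange _).mp ⟨t, rfl⟩).1.edgeWeight_eq_zero_of_sub fun hlab => h ?_, mul_zero]
      rw [sub_eq_add_neg, ← Pi.single_neg] at hlab ⊢
      exact add_single_mem_range hrange t hp hlab
    · simp [hκ _ hp]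

variable (D) in
/-- The weighted sum of all steps which raise one label by one, where the steps at the positions of
color `i` are scaled by `κ i`. -/
def raisingMatrix (L : α → P → ℤ) (κ : K → ℝ) : Matrix α α ℝ :=
  ∑ p, stepMatrix L (Pi.single p 1) fun c => κ (D.color p) * D.edgeWeight c p

lemma exists_eq_add_single_of_raisingMatrix_ne_zero {s t : α}
    (h : D.raisingMatrix L κ s t ≠ 0) : ∃ p, L s = L t + Pi.single p 1 :=
  exists_add_eq_of_sum_stepMatrix_ne_zero h

lemma IsMinusculeOn.commutator_raisingMatrix [Fintype α] [DecidableEq α] [Fintype K]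
    (hD : D.IsMinusculeOn J) (hL : Function.Injective L)
    (hrange : ∀ c, c ∈ Set.range L ↔ D.IsLabelling c ∧ ∀ p, D.color p ∉ J → c p = f p)
    (hκ₀ : ∀ i, 0 ≤ κ i) (hκ : ∀ i ∉ J, κ i = 0) :
    D.raisingMatrix L κ * (D.raisingMatrix L κ)ᵀ - (D.raisingMatrix L κ)ᵀ * D.raisingMatrix L κ =
      diagonal fun t => ∑ q, (∑ i, κ i * D.cartan i (D.color q)) * D.shiftedLabel (L t) q := by
  rw [raisingMatrix, (hD.isDiamondWeighting hL hrange hκ₀ hκ).commutator_sum_stepMatrix]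
  simp only [← mul_sub, hD.sum_mul_edgeWeight_sub ((hrange _).mp ⟨_, rfl⟩).1 hκ]

end Steps

end ColoredPoset

/-! ### The lattices `L6ab a b` -/

section Labelling

variable {N : Type} {adj : N → N → Prop} {pos : Finset (N × ℕ)} {k : ℕ} {extra : (pos → ℕ) → Prop}

instance : PartialOrder (CL.Elt adj pos k extra) :=
  PartialOrder.lift Subtype.val Subtype.val_injective

lemma le_of_ple {M : Type*} [Preorder M] {c : pos → M}
    (hc : ∀ x y : pos, CL.step adj pos x y → c y ≤ c x) {x y : pos} (h : CL.ple adj pos x y) :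
    c y ≤ c x := by
  obtain ⟨x, hx⟩ := x
  obtain ⟨y, hy⟩ := y
  dsimp only at h
  induction h with
  | refl => exact le_rfl
  | tail _ hstep ih => exact (hc ⟨_, hstep.1⟩ ⟨_, hy⟩ hstep).trans (ih hstep.1)

end Labelling

section E6

/-- The diagram of type `E₇`: the extra node `none` is attached to the node `m1` of `E₆`. -/
def diagramE7 : SimpleGraph (Option N6) where
  Adj
    | some i, some j => adj6 i j
    | some i, none => i = m1
    | none, some j => j = m1
    | none, none => False
  symm := ⟨by rintro (_ | i) (_ | j); exacts [id, id, id, Or.symm]⟩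
  loopless := ⟨by rintro (_ | _ | _) <;> decide⟩

instance : DecidableRel diagramE7.Adj := fun i j => by
  cases i <;> cases j <;> dsimp only [diagramE7] <;> infer_instance

/-- The poset `P24` together with three positions of color `none`, of ranks `-1`, `7` and `15`:
the minuscule poset of type `E₇`. -/
def framedP24 : ColoredPoset (Option N6) (pos24 ⊕ Fin 3) where
  diagram := diagramE7
  color := Sum.elim (fun x => some x.1.1) fun _ => none
  rank := Sum.elim (fun x => x.1.2) ![-1, 7, 15]

instance : DecidableRel framedP24.diagram.Adj := inferInstanceAs (DecidableRel diagramE7.Adj)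

instance : DecidableRel framedP24.Covers := fun _ _ => inferInstanceAs (Decidable (_ ∧ _))

instance : DecidableRel framedP24.Linked := fun _ _ => inferInstanceAs (Decidable (_ ∨ _))

lemma isMinusculeOn_framedP24 : framedP24.IsMinusculeOn {none}ᶜ where
  eq_of_rank_eq := by decide +kernel
  even_rank_sub := by decide +kernel
  odd_rank_sub := by decide +kernel
  exists_between := by decide +kernel
  two_between := by decide +kernel
  odd_card_lower := by decide +kernel
  card_adjPositions := by decide +kernel

/-- The sum of the positive coroots of type `E₆`, expanded in the simple coroots, so that its
product with the Cartan matrix is constant. -/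
def corootSum : Option N6 → ℤ
  | none => 0
  | some m1 => 16
  | some m2 => 30
  | some m3 => 42
  | some m4 => 22
  | some m5 => 30
  | some m6 => 16

lemma sum_corootSum_mul_cartan (j : Option N6) :
    ∑ i, corootSum i * framedP24.cartan i j = j.elim (-16) fun _ => 2 := by
  decide +revert +kernel

variable {a b : ℕ}

/-- The labels of the positions of `framedP24` of color `none`. The two bounds on all labels in
`L6ab a b` and the two constraints `extra6` say exactly that these labels extend a labelling
of `P24` to one of `framedP24`. -/
def frame (a b : ℕ) : Fin 3 → ℤ := ![a + b, a, 0]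

/-- The labelling of `framedP24` given by an element of `L6ab a b`. -/
def framedLabel (t : L6ab a b) : pos24 ⊕ Fin 3 → ℤ := Sum.elim (fun x => t.1 x) (frame a b)

lemma framedLabel_injective : Function.Injective (framedLabel (a := a) (b := b)) := fun _ _ h =>
  Subtype.ext <| funext fun x => Int.ofNat_inj.mp (congrFun h (Sum.inl x))

lemma eq_of_covers_inr {x : pos24} {i : Fin 3} : framedP24.Covers (.inl x) (.inr i) →
    x = ⟨(m1, 6), by decide⟩ ∧ i = 1 ∨ x = ⟨(m1, 14), by decide⟩ ∧ i = 2 := by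
  decide +revert +kernel

lemma eq_of_inr_covers {x : pos24} {i : Fin 3} : framedP24.Covers (.inr i) (.inl x) →
    x = ⟨(m1, 0), by decide⟩ ∧ i = 0 ∨ x = ⟨(m1, 8), by decide⟩ ∧ i = 1 := by
  decide +revert +kernel

lemma covers_inl_inl {x y : pos24} :
    framedP24.Covers (.inl x) (.inl y) ↔ CL.step adj6 pos24 x y := by
  have hrank : ((y.1.2 : ℤ) = x.1.2 + 1) ↔ y.1.2 = x.1.2 + 1 := by norm_cast
  exact ⟨fun h => ⟨x.2, y.2, h.1, hrank.mp h.2⟩, fun h => ⟨h.2.2.1, hrank.mpr h.2.2.2⟩⟩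

lemma isLabelling_framedLabel (t : L6ab a b) : framedP24.IsLabelling (framedLabel t) := by
  obtain ⟨hle, hanti, h8, h6⟩ := t.2
  rintro (x | i) (y | j) h
  · exact Int.ofNat_le.mpr (hanti y x (.single (covers_inl_inl.mp h)))
  · rcases eq_of_covers_inr h with ⟨rfl, rfl⟩ | ⟨rfl, rfl⟩
    · exact Int.ofNat_le.mpr h6
    · exact Int.natCast_nonneg _
  · rcases eq_of_inr_covers h with ⟨rfl, rfl⟩ | ⟨rfl, rfl⟩
    · exact Int.ofNat_le.mpr (hle _)
    · exact Int.ofNat_le.mpr h8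
  · exact h.1.elim

lemma exists_framedLabel_eq {c : pos24 ⊕ Fin 3 → ℤ} (hc : framedP24.IsLabelling c)
    (hframe : ∀ i, c (.inr i) = frame a b i) : ∃ t : L6ab a b, framedLabel t = c := by
  have hlower (p) : 0 ≤ c p := by
    refine (hframe 2).symm.trans_le (hc.le_of_forall_exists_covers (S := univ) ?_ p (mem_univ p))
    decide +kernel
  have hupper (p) : c p ≤ a + b := by
    refine (hc.le_of_forall_exists_covered (S := univ) ?_ p (mem_univ p)).trans_eq (hframe 0)
    decide +kernel
  have h8 := (hc (.inr 1) (.inl ⟨(m1, 8), by decide⟩) (by decide)).trans_eq (hframe 1)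
  have h6 := (hframe 1).symm.trans_le (hc (.inl ⟨(m1, 6), by decide⟩) (.inr 1) (by decide))
  refine ⟨⟨fun x => (c (.inl x)).toNat, fun x => Int.toNat_le.mpr (mod_cast hupper _),
    fun x y => le_of_ple fun x y h => Int.toNat_le_toNat (hc _ _ (covers_inl_inl.mpr h)),
    Int.toNat_le.mpr h8, (Int.le_toNat (hlower _)).mpr h6⟩, ?_⟩
  ext (x | i)
  · exact Int.toNat_of_nonneg (hlower _)
  · exact (hframe i).symm

lemma mem_range_framedLabel (c : pos24 ⊕ Fin 3 → ℤ) :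
    c ∈ Set.range (framedLabel (a := a) (b := b)) ↔ framedP24.IsLabelling c ∧
      ∀ p, framedP24.color p ∉ ({none}ᶜ : Finset (Option N6)) →
        c p = Sum.elim (fun _ => 0) (frame a b) p := by
  constructor
  · rintro ⟨t, rfl⟩
    refine ⟨isLabelling_framedLabel t, ?_⟩
    rintro (x | i) hp
    · simp [framedP24] at hp
    · rfl
  · exact fun ⟨hc, hframe⟩ =>
      exists_framedLabel_eq hc fun i => hframe (.inr i) (by simp [framedP24])

lemma sum_framedLabel (t : L6ab a b) : ∑ p, framedLabel t p = CL.rk t + (2 * a + b) := by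
  simp only [framedLabel, Fintype.sum_sum_type, Sum.elim_inl, Sum.elim_inr, CL.rk, univ_eq_attach,
    Fin.sum_univ_three, frame, Nat.cast_sum,
    cons_val_zero, cons_val_one, Matrix.cons_val, add_zero]
  ring

lemma sum_mul_shiftedLabel (t : L6ab a b) :
    ∑ q, (∑ i, (corootSum i : ℝ) * framedP24.cartan i (framedP24.color q)) *
      framedP24.shiftedLabel (framedLabel t) q = 2 * CL.rk t - 16 * (2 * a + b) := by
  have hcoef (j : Option N6) : ∑ i, (corootSum i : ℝ) * framedP24.cartan i j =
      ((j.elim (-16) fun _ => 2 : ℤ) : ℝ) := mod_cast sum_corootSum_mul_cartan j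
  have hrank : ∑ x : pos24, (x.1.2 : ℝ) = 168 := mod_cast (by decide : ∑ x : pos24, x.1.2 = 168)
  simp only [hcoef, ColoredPoset.shiftedLabel, Fintype.sum_sum_type, Fin.sum_univ_three]
  simp only [framedP24, framedLabel, frame, Sum.elim_inl, Sum.elim_inr, Option.elim, ← mul_sum,
    sum_sub_distrib, ← sum_div, Int.cast_natCast, hrank, CL.rk, ← univ_eq_attach, Nat.cast_sum,
    cons_val_zero, cons_val_one, Matrix.cons_val]
  push_cast
  ring

lemma lt_of_framedLabel_eq_add_single {s t : L6ab a b} {p : pos24 ⊕ Fin 3}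
    (h : framedLabel s = framedLabel t + Pi.single p 1) : t < s ∧ CL.rk s = CL.rk t + 1 := by
  have hrk : CL.rk s = CL.rk t + 1 := by
    have hsum := congrArg (fun c => ∑ q, c q) h
    simp only [Pi.add_apply, sum_add_distrib, sum_framedLabel, sum_pi_single', mem_univ,
      if_true] at hsum
    omega
  have hle : framedLabel t ≤ framedLabel s :=
    h ▸ le_add_of_nonneg_right (Pi.single_nonneg.mpr zero_le_one)
  refine ⟨lt_of_le_of_ne (fun x => Int.ofNat_le.mp (hle (.inl x))) fun hts => ?_, hrk⟩
  rw [hts] at hrk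
  omega

/-- The positions of `P24` below `(1', 6)`, where all labels are at least `a`. -/
def lowerWing : Finset pos24 :=
  {x | x.1 ∈ ({(m1, 0), (m2, 1), (m3, 2), (m4, 3), (m5, 3), (m3, 4), (m2, 5), (m1, 6)} :
    Finset (N6 × ℕ))}

/-- The positions of `P24` above `(1', 8)`, where all labels are at most `a`. -/
def upperWing : Finset pos24 :=
  {x | x.1 ∈ ({(m1, 8), (m2, 9), (m3, 10), (m4, 11), (m5, 11), (m3, 12), (m2, 13), (m1, 14)} :
    Finset (N6 × ℕ))}

lemma le_of_mem_lowerWing (t : L6ab a b) {x : pos24} (hx : x ∈ lowerWing) : a ≤ t.1 x := by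
  have h := (isLabelling_framedLabel t).le_of_forall_exists_covers (q := .inr 1)
    (S := insert (.inr 1) (lowerWing.map .inl)) (by decide +kernel) (.inl x) (by simpa using hx)
  exact Int.ofNat_le.mp h

lemma le_of_mem_upperWing (t : L6ab a b) {x : pos24} (hx : x ∈ upperWing) : t.1 x ≤ a := by
  have h := (isLabelling_framedLabel t).le_of_forall_exists_covered (q := .inr 1)
    (S := insert (.inr 1) (upperWing.map .inl)) (by decide +kernel) (.inl x) (by simpa using hx)
  exact Int.ofNat_le.mp h

lemma mem_lowerWing_of_covers {x y : pos24} :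
    framedP24.Covers (.inl x) (.inl y) → y ∈ lowerWing → x ∈ lowerWing := by
  decide +revert +kernel

lemma card_lowerWing : #lowerWing = 8 := by decide +kernel

lemma card_upperWing : #upperWing = 8 := by decide +kernel

lemma le_rk (t : L6ab a b) : 8 * a ≤ CL.rk t := by
  calc 8 * a = #lowerWing • a := by rw [card_lowerWing, smul_eq_mul]
    _ ≤ ∑ x ∈ lowerWing, t.1 x := card_nsmul_le_sum _ _ _ fun _ => le_of_mem_lowerWing t
    _ ≤ CL.rk t := sum_le_sum_of_subset (subset_univ lowerWing)

lemma rk_le (t : L6ab a b) : CL.rk t ≤ 8 * a + 16 * (a + b) := by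
  calc CL.rk t = ∑ x ∈ upperWing, t.1 x + ∑ x ∈ upperWingᶜ, t.1 x :=
      (sum_add_sum_compl upperWing t.1).symm
    _ ≤ #upperWing • a + #upperWingᶜ • (a + b) :=
      add_le_add (sum_le_card_nsmul _ _ _ fun _ => le_of_mem_upperWing t)
        (sum_le_card_nsmul _ _ _ fun x _ => t.2.1 x)
    _ = 8 * a + 16 * (a + b) := by
      rw [card_compl, card_upperWing, Fintype.card_coe, smul_eq_mul, smul_eq_mul]
      rfl

/-- The least element of `L6ab a b`. -/
def minLabelling (a b : ℕ) : L6ab a b :=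
  ⟨fun x => if x ∈ lowerWing then a else 0, fun x => by dsimp only; split_ifs <;> omega,
    fun _ _ => le_of_ple (c := fun x => if x ∈ lowerWing then a else 0) fun x y h => by
      have hmem := mem_lowerWing_of_covers (covers_inl_inl.mpr h)
      split_ifs <;> simp_all,
    (if_neg (by decide)).trans_le a.zero_le, (if_pos (by decide)).ge⟩

lemma rk_minLabelling : CL.rk (minLabelling a b) = 8 * a := by
  rw [CL.rk, minLabelling, ← univ_eq_attach, sum_ite_mem, univ_inter, sum_const, card_lowerWing,
    smul_eq_mul]

lemma rho0_eq : rho0 a b = 8 * a :=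
  le_antisymm (Nat.sInf_le ⟨minLabelling a b, rk_minLabelling⟩)
    (le_csInf ⟨_, minLabelling a b, rfl⟩ (Set.forall_mem_range.mpr le_rk))

lemma nrk6_eq (i : ℕ) : nrk6 a b i = #{t : L6ab a b | CL.rk t - rho0 a b = i} := by
  rw [nrk6, Nat.card_eq_fintype_card, Fintype.card_subtype]

/-- The raising operator of an action of `sl₂` on the functions on `L6ab a b`. -/
def raisingMatrixE6 (a b : ℕ) : Matrix (L6ab a b) (L6ab a b) ℝ :=
  framedP24.raisingMatrix framedLabel fun i => corootSum i

lemma lt_of_raisingMatrixE6_ne_zero {s t : L6ab a b} (h : raisingMatrixE6 a b s t ≠ 0) :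
    t < s ∧ CL.rk s = CL.rk t + 1 := by
  obtain ⟨p, hp⟩ := ColoredPoset.exists_eq_add_single_of_raisingMatrix_ne_zero h
  exact lt_of_framedLabel_eq_add_single hp

lemma weight_eq (t : L6ab a b) : 2 * ((CL.rk t - rho0 a b : ℕ) : ℝ) - (16 * (a + b) : ℕ) =
    2 * CL.rk t - 16 * (2 * a + b) := by
  rw [rho0_eq, Nat.cast_sub (le_rk t)]
  push_cast
  ring

lemma isRaisingOperator_raisingMatrixE6 : IsRaisingOperator (raisingMatrixE6 a b)
    fun t => 2 * ((CL.rk t - rho0 a b : ℕ) : ℝ) - (16 * (a + b) : ℕ) := by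
  have hnonneg (i : Option N6) : (0 : ℝ) ≤ corootSum i :=
    mod_cast (by decide +revert : 0 ≤ corootSum i)
  have hzero : ∀ i ∉ ({none}ᶜ : Finset (Option N6)), (corootSum i : ℝ) = 0 := by simp [corootSum]
  simp only [weight_eq]
  constructor
  · intro s t h
    simp only [(lt_of_raisingMatrixE6_ne_zero h).2]
    push_cast
    ring
  · rw [raisingMatrixE6, isMinusculeOn_framedP24.commutator_raisingMatrix framedLabel_injective
      mem_range_framedLabel hnonneg hzero]
    simp only [sum_mul_shiftedLabel]

end E6

end Peck

/-- normalized ranks of `L6(a,b)` lie in `{0,…,16(a+b)}`, and `L6(a,b)` is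
rank symmetric, rank unimodal, and strongly Sperner. -/
theorem statement_19 (a b : ℕ) :
    (∀ t : L6ab a b, rho0 a b ≤ CL.rk t ∧ CL.rk t - rho0 a b ≤ 16 * (a + b)) ∧
    (∀ i ≤ 16 * (a + b), nrk6 a b i = nrk6 a b (16 * (a + b) - i)) ∧
    (∃ u ≤ 16 * (a + b),
      (∀ i j, i ≤ j → j ≤ u → nrk6 a b i ≤ nrk6 a b j) ∧
      (∀ i j, u ≤ i → i ≤ j → j ≤ 16 * (a + b) → nrk6 a b j ≤ nrk6 a b i)) ∧
    (∀ m : ℕ, 0 < m → ∀ A : Fin m → Set (L6ab a b),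
      (∀ a', ∀ s ∈ A a', ∀ t ∈ A a', s ≠ t → ¬CL.elLe s t ∧ ¬CL.elLe t s) →
      ∃ S : Finset ℕ, S ⊆ Finset.range (16 * (a + b) + 1) ∧ S.card ≤ m ∧
        Nat.card (⋃ a', A a') ≤ ∑ i ∈ S, nrk6 a b i) := by
  have hX := Peck.isRaisingOperator_raisingMatrixE6 (a := a) (b := b)
  have hrank (t : L6ab a b) : CL.rk t - rho0 a b ≤ 16 * (a + b) := by
    have := Peck.rk_le t
    rw [Peck.rho0_eq]
    omega
  simp only [Peck.nrk6_eq]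
  refine ⟨fun t => ⟨Peck.rho0_eq.trans_le (Peck.le_rk t), hrank t⟩, fun i hi => ?_,
    ⟨8 * (a + b), by omega, fun i j hij hj => ?_, fun i j hi hij _ => ?_⟩, fun m _ A hA => ?_⟩
  · obtain hle | hle := le_total i (16 * (a + b) - i)
    · exact (Peck.card_rank_eq_le_of_add_le hX hle (by omega)).antisymm
        (Peck.card_rank_eq_le_of_le_add hX hle (by omega))
    · exact (Peck.card_rank_eq_le_of_le_add hX hle (by omega)).antisymm
        (Peck.card_rank_eq_le_of_add_le hX hle (by omega))
  · exact Peck.card_rank_eq_le_of_add_le hX hij (by omega)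
  · exact Peck.card_rank_eq_le_of_le_add hX hij (by omega)
  · exact Peck.exists_card_iUnion_antichain_le hX
      (fun s t h => (Peck.lt_of_raisingMatrixE6_ne_zero h).1) hrank
      fun i s hs t ht hst => (hA i s hs t ht hst).1

end
end
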